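/- Let p be odd, v : ℝ^p → ℝ^p continuously differentiable and homogeneous of degree 2, admitting a symmetric positive definite bilinear form B with B(v(ω), ω) = 0 for all ω. Suppose the nonzero zero set of v is a union of finitely many punctured lines ℓ₁, …, ℓ_N (distinct one-dimensional subspaces), all nondegenerate in the sense that at every nonzero zero ω of v, zero is a root of algebraic multiplicity exactly 1 of the characteristic polynomial of the Jacobian Dv(ω). Then the number N of straight lines of steady motions is odd. -/

import Mathlib

/-- The Jacobian matrix of a map `v : ℝᵖ → ℝᵖ` at a point `ω`. -/
noncomputable def jacobianMatrix {p : ℕ} (v : (Fin p → ℝ) → (Fin p → ℝ))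
    (ω : Fin p → ℝ) : Matrix (Fin p) (Fin p) ℝ :=
  Matrix.of fun i j => fderiv ℝ v ω (Pi.single j 1) i

/-!
For `δ > 0` the map `f_δ(z) = z + δ⁻¹ v(z)` is proper, since `⟨f_δ(z), z⟩ = ‖z‖²` for the inner
product `B`, and it is homotopic to the identity through such maps, so
`∫ φ(f_δ) det Df_δ = ∫ φ` for every test function `φ`. Choose unit generators `uᵢ` of the lines
lying in one open half-space and `φ` supported where all `⟨uᵢ, ·⟩` are positive, and let `δ → 0`.
The integral concentrates on two kinds of sets. On a ball of radius `√δ R` it is asymptotic to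
`∫ φ(v) det Dv` over a fixed ball, which vanishes because `v` is even and the dimension is odd.
On a tube of radius `δ C` around the ray `ℝ₊uᵢ` it tends to `sign (det Sᵢ) ∫ φ`, where `Sᵢ` fixes
`uᵢ` and agrees with the derivative `Dv(uᵢ)` on the orthogonal hyperplane. Hence
`∑ᵢ sign (det Sᵢ) = 1`, and a sum of `N` signs has the parity of `N`.
-/

open MeasureTheory Set Filter Metric Topology Polynomial

section Degree

theorem exists_polynomial_eval_eq_det_one_add_smul {K V : Type*} [Field K] [AddCommGroup V]
    [Module K V] [FiniteDimensional K V] (A : V →ₗ[K] V) :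
    ∃ q : K[X], q.natDegree ≤ Module.finrank K V ∧
      ∀ t, q.eval t = LinearMap.det (LinearMap.id + t • A) := by
  let b := Module.finBasis K V
  let M := LinearMap.toMatrix b b A
  refine ⟨((X : K[X]) • M.map C + (1 : Matrix _ _ K).map C).det, ?_, fun t => ?_⟩
  · simpa using natDegree_det_X_add_C_le M 1
  · rw [← LinearMap.det_toMatrix b, map_add, LinearMap.toMatrix_id, map_smul,
      ← coe_evalRingHom, RingHom.map_det]
    congr 1
    ext i j
    by_cases hij : i = j <;> simp [M, hij, add_comm, mul_comm t]

theorem exists_polynomial_eval_eq_integral {α : Type*} [MeasurableSpace α] {μ : Measure α} (n : ℕ)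
    {F : ℝ → α → ℝ} (hF : ∀ t, Integrable (F t) μ)
    (hpoly : ∀ x, ∃ q : ℝ[X], q.natDegree ≤ n ∧ ∀ t, q.eval t = F t x) :
    ∃ P : ℝ[X], ∀ t, P.eval t = ∫ x, F t x ∂μ := by
  let node : Fin (n + 1) → ℝ := fun j => (j : ℕ)
  have hnode : InjOn node (Finset.univ : Finset (Fin (n + 1))) :=
    fun i _ j _ h => by simpa [node, Fin.ext_iff] using h
  have interpolation (t : ℝ) (x : α) :
      F t x = ∑ j, F (node j) x * (Lagrange.basis Finset.univ node j).eval t := by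
    obtain ⟨q, hdeg, heval⟩ := hpoly x
    have hq : q.degree < (Finset.univ : Finset (Fin (n + 1))).card := by
      rw [Finset.card_univ, Fintype.card_fin]
      exact (natDegree_le_iff_degree_le.1 hdeg).trans_lt (by exact_mod_cast n.lt_succ_self)
    rw [← heval, Lagrange.eq_interpolate hnode hq, Lagrange.interpolate_apply, eval_finsetSum]
    simp [heval]
  refine ⟨∑ j, C (∫ x, F (node j) x ∂μ) * Lagrange.basis Finset.univ node j, fun t => ?_⟩
  simp_rw [interpolation t]
  rw [integral_finsetSum _ fun j _ => (hF (node j)).mul_const _]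
  simp [eval_finsetSum, integral_mul_const]

theorem image_eq_self_of_eqOn_compl_id {α : Type*} {f : α → α} {s : Set α}
    (hf : Function.Bijective f) (hs : EqOn f id sᶜ) : f '' s = s := by
  rw [← compl_inj_iff, ← image_compl_eq hf, hs.image_eq, image_id]

theorem bijective_id_add_of_lipschitzWith {E : Type*} [NormedAddCommGroup E] [CompleteSpace E]
    {g : E → E} {K : NNReal} (hK : K < 1) (hg : LipschitzWith K g) :
    Function.Bijective fun x => x + g x := by
  have contracting (y : E) : ContractingWith K fun x => y - g x :=
    ⟨hK, by simpa using (LipschitzWith.const y).sub hg⟩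
  refine ⟨fun x₁ x₂ h => ?_, fun y => ⟨(contracting y).fixedPoint, ?_⟩⟩
  · refine (contracting (x₁ + g x₁)).fixedPoint_unique' ?_ ?_
    · exact add_sub_cancel_right x₁ (g x₁)
    · exact sub_eq_of_eq_add h
  · exact (sub_eq_iff_eq_add.1 (contracting y).fixedPoint_isFixedPt.eq).symm

variable {E : Type*} [NormedAddCommGroup E] [NormedSpace ℝ E]

theorem continuousLinearMap_det_one : (1 : E →L[ℝ] E).det = 1 :=
  LinearMap.det_id

theorem continuousLinearMap_det_mul (A B : E →L[ℝ] E) : (A * B).det = A.det * B.det :=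
  LinearMap.det_comp _ _

theorem continuous_det_one_add : Continuous fun A : E →L[ℝ] E => (1 + A).det :=
  ContinuousLinearMap.continuous_det.comp (continuous_const.add continuous_id)

theorem det_one_add_smulRight [FiniteDimensional ℝ E] (L : E →L[ℝ] ℝ) (a : E) :
    (1 + L.smulRight a).det = 1 + L a := by
  have h : ((1 + L.smulRight a : E →L[ℝ] E) : E →ₗ[ℝ] E) =
      LinearMap.transvection (L : E →ₗ[ℝ] ℝ) a := by
    ext x
    simp [LinearMap.transvection.apply]
  rw [ContinuousLinearMap.det, h, LinearMap.transvection.det, ContinuousLinearMap.coe_coe]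

/-- The density, with respect to Lebesgue measure, of the pullback `f^*(φ dx)` of a top-degree
differential form. -/
noncomputable def formPullback (f : E → E) (φ : E → ℝ) (x : E) : ℝ :=
  φ (f x) * (fderiv ℝ f x).det

theorem formPullback_comp {f g : E → E} {x : E} (hf : DifferentiableAt ℝ f (g x))
    (hg : DifferentiableAt ℝ g x) (φ : E → ℝ) :
    formPullback (f ∘ g) φ x = formPullback g (formPullback f φ) x := by
  have hdet : (fderiv ℝ (f ∘ g) x).det = (fderiv ℝ f (g x)).det * (fderiv ℝ g x).det := by
    rw [fderiv_comp x hf hg, ← continuousLinearMap_det_mul]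
    rfl
  rw [formPullback, hdet, ← mul_assoc]
  rfl

theorem formPullback_congr {f g : E → E} {x : E} (h : f =ᶠ[𝓝 x] g) (φ : E → ℝ) :
    formPullback f φ x = formPullback g φ x := by
  rw [formPullback, formPullback, h.eq_of_nhds, h.fderiv_eq]

theorem formPullback_of_apply_eq_zero {f : E → E} {φ : E → ℝ} {x : E} (h : φ (f x) = 0) :
    formPullback f φ x = 0 := by
  rw [formPullback, h, zero_mul]

theorem continuous_formPullback {f : E → E} {φ : E → ℝ}
    (hf : ContDiff ℝ 1 f) (hφ : Continuous φ) : Continuous (formPullback f φ) :=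
  (hφ.comp hf.continuous).mul
    (ContinuousLinearMap.continuous_det.comp (hf.continuous_fderiv one_ne_zero))

theorem fderiv_id_add {g : E → E} {x : E} (hg : DifferentiableAt ℝ g x) :
    fderiv ℝ (fun z => z + g z) x = 1 + fderiv ℝ g x :=
  ((hasFDerivAt_id x).add hg.hasFDerivAt).fderiv

theorem det_one_add_fderiv_add_smul [FiniteDimensional ℝ E] {g : E → E} {γ : E → ℝ} {x : E}
    (hg : DifferentiableAt ℝ g x) (hγ : DifferentiableAt ℝ γ (x + g x)) (a : E) :
    (1 + fderiv ℝ (fun z => g z + γ (z + g z) • a) x).det = (1 + fderiv ℝ g x).det +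
      formPullback (fun z => z + g z) (fun y => fderiv ℝ γ y a) x := by
  have hderiv : HasFDerivAt (fun z => g z + γ (z + g z) • a) (fderiv ℝ g x +
      ((fderiv ℝ γ (x + g x)).comp (1 + fderiv ℝ g x)).smulRight a) x :=
    hg.hasFDerivAt.add ((hγ.hasFDerivAt.comp x
      ((hasFDerivAt_id x).add hg.hasFDerivAt)).smul_const a)
  have hfactor : 1 + fderiv ℝ (fun z => g z + γ (z + g z) • a) x =
      (1 + (fderiv ℝ γ (x + g x)).smulRight a) * (1 + fderiv ℝ g x) := by
    rw [hderiv.fderiv]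
    ext y
    simp only [ContinuousLinearMap.comp_add, add_apply, one_apply_eq_self,
      ContinuousLinearMap.smulRight_apply, ContinuousLinearMap.comp_apply, add_smul,
      mul_apply_eq_comp, map_add]
    abel
  rw [hfactor, continuousLinearMap_det_mul, det_one_add_smulRight, formPullback, fderiv_id_add hg]
  ring

theorem eventually_forall_det_one_add_smul_pos {A : E → E →L[ℝ] E} (hA : Continuous A)
    (hc : HasCompactSupport A) : ∀ᶠ t : ℝ in 𝓝 0, ∀ x, 0 < (1 + t • A x).det := by
  obtain ⟨D, hD⟩ := hc.exists_bound_of_continuous hA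
  have hdet : ∀ᶠ B : E →L[ℝ] E in 𝓝 0, 0 < (1 + B).det := by
    refine continuous_det_one_add.continuousAt.eventually (lt_mem_nhds ?_)
    simp [continuousLinearMap_det_one]
  obtain ⟨η, hη, hball⟩ := Metric.eventually_nhds_iff.1 hdet
  have hsmall : ∀ᶠ t : ℝ in 𝓝 0, |t| * D < η := by
    have : ContinuousAt (fun t : ℝ => |t| * D) 0 := by fun_prop
    exact this.eventually_lt_const (by simpa using hη)
  filter_upwards [hsmall] with t ht x
  refine hball ?_
  rw [dist_zero_right, norm_smul, Real.norm_eq_abs]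
  exact (mul_le_mul_of_nonneg_left (hD x) (abs_nonneg t)).trans_lt ht

theorem integral_fderiv_sub_smul_apply {φ : E → ℝ} (hφ : ContDiff ℝ 1 φ) (x e : E) :
    ∫ s in (0 : ℝ)..1, fderiv ℝ φ (x - s • e) e = φ x - φ (x - e) := by
  have hderiv (s : ℝ) (_ : s ∈ uIcc (0 : ℝ) 1) :
      HasDerivAt (fun s : ℝ => -φ (x - s • e)) (fderiv ℝ φ (x - s • e) e) s := by
    have hline : HasDerivAt (fun s : ℝ => x - s • e) (-e) s := by
      simpa using ((hasDerivAt_id s).smul_const e).const_sub x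
    simpa using ((hφ.differentiable one_ne_zero _).hasFDerivAt.comp_hasDerivAt s hline).fun_neg
  have hcont : Continuous fun s : ℝ => fderiv ℝ φ (x - s • e) e :=
    ((hφ.continuous_fderiv one_ne_zero).comp (by fun_prop)).clm_apply continuous_const
  rw [intervalIntegral.integral_eq_sub_of_hasDerivAt hderiv (hcont.intervalIntegrable 0 1)]
  simp [sub_eq_neg_add, add_comm]

variable [MeasurableSpace E] [BorelSpace E]

theorem integrable_det_one_add_sub_one (μ : Measure E) [IsFiniteMeasureOnCompacts μ]
    {A : E → E →L[ℝ] E} (hA : Continuous A)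
    (hc : HasCompactSupport A) : Integrable (fun x => (1 + A x).det - 1) μ := by
  refine ((continuous_det_one_add.comp hA).sub continuous_const).integrable_of_hasCompactSupport ?_
  refine HasCompactSupport.intro hc fun x hx => ?_
  simp [image_eq_zero_of_notMem_tsupport hx, continuousLinearMap_det_one]

theorem integrable_formPullback_id_add (μ : Measure E) [IsFiniteMeasureOnCompacts μ]
    {g : E → E} (hg : ContDiff ℝ 1 g)
    (hc : HasCompactSupport g) {φ : E → ℝ} (hφ : Continuous φ) (hφc : HasCompactSupport φ) :
    Integrable (formPullback (fun z => z + g z) φ) μ := by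
  refine (continuous_formPullback (contDiff_id.add hg) hφ).integrable_of_hasCompactSupport ?_
  refine HasCompactSupport.intro (hc.isCompact.union hφc) fun x hx => ?_
  rw [mem_union, not_or] at hx
  exact formPullback_of_apply_eq_zero (by simp [image_eq_zero_of_notMem_tsupport hx.1,
    image_eq_zero_of_notMem_tsupport hx.2])

variable [FiniteDimensional ℝ E] (μ : Measure E) [μ.IsAddHaarMeasure]

theorem setIntegral_formPullback {f : E → E} {s : Set E} (hs : MeasurableSet s)
    (hf : ∀ x ∈ s, DifferentiableAt ℝ f x) (hinj : InjOn f s) {σ : SignType}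
    (hσ : ∀ x ∈ s, SignType.sign (fderiv ℝ f x).det = σ) (φ : E → ℝ) :
    ∫ x in s, formPullback f φ x ∂μ = σ * ∫ y in f '' s, φ y ∂μ := by
  rw [integral_image_eq_integral_abs_det_fderiv_smul μ hs
    (fun x hx => (hf x hx).hasFDerivAt.hasFDerivWithinAt) hinj, ← integral_const_mul]
  refine setIntegral_congr_fun hs fun x hx => ?_
  change φ (f x) * (fderiv ℝ f x).det = σ * (|(fderiv ℝ f x).det| * φ (f x))
  rw [← mul_assoc, ← hσ x hx, sign_mul_abs, mul_comm]

theorem integral_det_one_add_fderiv_sub_one_of_lipschitzWith {g : E → E} (hg : ContDiff ℝ 1 g)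
    (hc : HasCompactSupport g) {K : NNReal} (hK : K < 1) (hlip : LipschitzWith K g)
    (hpos : ∀ x, 0 < (1 + fderiv ℝ g x).det) :
    ∫ x, ((1 + fderiv ℝ g x).det - 1) ∂μ = 0 := by
  have hdiff : Differentiable ℝ g := hg.differentiable one_ne_zero
  have hbij := bijective_id_add_of_lipschitzWith hK hlip
  have himage : (fun x => x + g x) '' tsupport g = tsupport g :=
    image_eq_self_of_eqOn_compl_id hbij fun x hx => by
      simp [image_eq_zero_of_notMem_tsupport hx]
  have hcov := setIntegral_formPullback μ (isClosed_tsupport g).measurableSet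
    (f := fun x => x + g x) (fun x _ => differentiableAt_id.add (hdiff x))
    hbij.injective.injOn (σ := 1)
    (fun x _ => by rw [fderiv_id_add (hdiff x), sign_eq_one_iff]; exact hpos x) (fun _ => 1)
  simp only [himage, formPullback, fderiv_id_add (hdiff _), one_mul, SignType.coe_one] at hcov
  rw [← setIntegral_eq_integral_of_forall_compl_eq_zero (s := tsupport g), integral_sub, hcov,
    sub_self]
  · exact (continuous_det_one_add.comp
      (hg.continuous_fderiv one_ne_zero)).continuousOn.integrableOn_compact hc
  · exact continuousOn_const.integrableOn_compact hc
  · intro x hx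
    simp [image_eq_zero_of_notMem_tsupport fun h => hx (tsupport_fderiv_subset ℝ h),
      continuousLinearMap_det_one]

theorem integral_det_one_add_fderiv_sub_one {g : E → E} (hg : ContDiff ℝ 1 g)
    (hc : HasCompactSupport g) : ∫ x, ((1 + fderiv ℝ g x).det - 1) ∂μ = 0 := by
  have hDc := hc.fderiv (𝕜 := ℝ)
  have hD : Continuous (fderiv ℝ g) := hg.continuous_fderiv one_ne_zero
  obtain ⟨K, hK⟩ := hg.lipschitzWith_of_hasCompactSupport hc one_ne_zero
  have hcontracting : ∀ᶠ t : ℝ in 𝓝 0, ‖t‖₊ * K < 1 := by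
    have : ContinuousAt (fun t : ℝ => ‖t‖₊ * K) 0 := by fun_prop
    exact this.eventually_lt_const (by simp)
  have hsmall : ∀ᶠ t : ℝ in 𝓝 0, ∫ x, ((1 + t • fderiv ℝ g x).det - 1) ∂μ = 0 := by
    filter_upwards [hcontracting, eventually_forall_det_one_add_smul_pos hD hDc] with t ht hpos
    have hfderiv (x : E) : fderiv ℝ (t • g) x = t • fderiv ℝ g x :=
      fderiv_const_smul (hg.differentiable one_ne_zero x) t
    simp only [← hfderiv] at hpos ⊢
    exact integral_det_one_add_fderiv_sub_one_of_lipschitzWith μ (hg.const_smul t)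
      (hc.smul_left (f := fun _ => t)) ht ((lipschitzWith_smul t).comp hK) hpos
  obtain ⟨P, hP⟩ := exists_polynomial_eval_eq_integral (μ := μ) (Module.finrank ℝ E)
    (F := fun t x => (1 + t • fderiv ℝ g x).det - 1)
    (fun t => integrable_det_one_add_sub_one μ (hD.const_smul t)
      (hDc.smul_left (f := fun _ => t)))
    (fun x => by
      obtain ⟨q, hdeg, hq⟩ := exists_polynomial_eval_eq_det_one_add_smul (fderiv ℝ g x).toLinearMap
      exact ⟨q - C 1, natDegree_sub_C.trans_le hdeg, fun t => by
        rw [eval_sub, eval_C, hq]; rfl⟩)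
  have hP0 : P = 0 := eq_of_infinite_eval_eq P 0 <| (infinite_of_mem_nhds 0 hsmall).mono
    fun t ht => by rw [mem_ofPred_eq, hP, eval_zero]; exact ht
  simpa [hP0] using (hP 1).symm

theorem integral_formPullback_fderiv_apply {g : E → E} (hg : ContDiff ℝ 1 g)
    (hc : HasCompactSupport g) {γ : E → ℝ} (hγ : ContDiff ℝ 1 γ) (hγc : HasCompactSupport γ)
    (a : E) : ∫ x, formPullback (fun z => z + g z) (fun y => fderiv ℝ γ y a) x ∂μ = 0 := by
  have hgd : Differentiable ℝ g := hg.differentiable one_ne_zero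
  have hγd : Differentiable ℝ γ := hγ.differentiable one_ne_zero
  let k : E → E := fun x => g x + γ (x + g x) • a
  have hkd : ContDiff ℝ 1 k := hg.add ((hγ.comp (contDiff_id.add hg)).smul contDiff_const)
  have hkc : HasCompactSupport k := by
    refine HasCompactSupport.intro (hc.isCompact.union hγc) fun x hx => ?_
    rw [mem_union, not_or] at hx
    simp [k, image_eq_zero_of_notMem_tsupport hx.1, image_eq_zero_of_notMem_tsupport hx.2]
  have hdet (x : E) := det_one_add_fderiv_add_smul (hgd x) (hγd (x + g x)) a
  have hg0 := integral_det_one_add_fderiv_sub_one μ hg hc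
  have hk0 := integral_det_one_add_fderiv_sub_one μ hkd hkc
  have hgi := integrable_det_one_add_sub_one μ (hg.continuous_fderiv one_ne_zero)
    (hc.fderiv (𝕜 := ℝ))
  have hki := integrable_det_one_add_sub_one μ (hkd.continuous_fderiv one_ne_zero)
    (hkc.fderiv (𝕜 := ℝ))
  calc ∫ x, formPullback (fun z => z + g z) (fun y => fderiv ℝ γ y a) x ∂μ
      = ∫ x, (((1 + fderiv ℝ k x).det - 1) - ((1 + fderiv ℝ g x).det - 1)) ∂μ := by
        simp_rw [k, hdet, sub_sub_sub_cancel_right, add_sub_cancel_left]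
    _ = 0 := by rw [integral_sub hki hgi, hk0, hg0, sub_self]

theorem integrable_restrict_prod_of_continuous {F : ℝ × E → ℝ} (hF : Continuous F) {a b : ℝ}
    {K : Set E} (hK : IsCompact K) (hzero : ∀ s ∈ uIcc a b, ∀ x ∉ K, F (s, x) = 0) :
    Integrable F ((volume.restrict (uIoc a b)).prod μ) := by
  have hFK := hF.continuousOn.integrableOn_compact (μ := volume.prod μ)
    (isCompact_uIcc (a := a) (b := b) |>.prod hK)
  have hFu : IntegrableOn F (uIcc a b ×ˢ univ) (volume.prod μ) :=
    hFK.of_forall_sdiff_eq_zero (measurableSet_uIcc.prod .univ) fun q hq =>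
      hzero q.1 hq.1.1 q.2 fun hx => hq.2 ⟨hq.1.1, hx⟩
  rw [← Measure.restrict_univ (μ := μ), Measure.prod_restrict]
  exact hFu.mono_set (prod_mono uIoc_subset_uIcc subset_rfl)

theorem integral_formPullback_comp_sub {g : E → E} (hg : ContDiff ℝ 1 g)
    (hc : HasCompactSupport g) {φ : E → ℝ} (hφ : ContDiff ℝ 1 φ) (hφc : HasCompactSupport φ)
    (e : E) :
    ∫ x, formPullback (fun z => z + g z) (fun y => φ (y - e)) x ∂μ =
      ∫ x, formPullback (fun z => z + g z) φ x ∂μ := by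
  set f : E → E := fun z => z + g z
  have hf : ContDiff ℝ 1 f := contDiff_id.add hg
  have hφe (s : ℝ) : ContDiff ℝ 1 (fun y => φ (y - s • e)) :=
    hφ.comp (contDiff_id.sub contDiff_const)
  have hφec (s : ℝ) : HasCompactSupport fun y => φ (y - s • e) :=
    hφc.comp_homeomorph (Homeomorph.subRight (s • e))
  let F : ℝ × E → ℝ := fun q => formPullback f (fun y => fderiv ℝ φ (y - q.1 • e) e) q.2
  have hF : Continuous F :=
    (((hφ.continuous_fderiv one_ne_zero).comp ((hf.continuous.comp continuous_snd).sub
      (continuous_fst.smul continuous_const))).clm_apply continuous_const).mul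
    (ContinuousLinearMap.continuous_det.comp
      ((hf.continuous_fderiv one_ne_zero).comp continuous_snd))
  have hzero (s : ℝ) : ∫ x, F (s, x) ∂μ = 0 := by
    simpa only [fderiv_comp_sub] using
      integral_formPullback_fderiv_apply μ hg hc (hφe s) (hφec s) e
  have hcompact : IsCompact
      (tsupport g ∪ (fun r : ℝ × E => r.2 + r.1 • e) '' uIcc 0 1 ×ˢ tsupport φ) :=
    hc.isCompact.union ((isCompact_uIcc.prod hφc).image (by fun_prop))
  have hFi := integrable_restrict_prod_of_continuous μ hF hcompact fun s hs x hx => by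
    rw [mem_union, not_or] at hx
    have hfx : f x = x := by simp [f, image_eq_zero_of_notMem_tsupport hx.1]
    have hmem : x - s • e ∉ tsupport (fderiv ℝ φ) := fun h =>
      hx.2 ⟨(s, x - s • e), ⟨hs, tsupport_fderiv_subset ℝ h⟩, sub_add_cancel _ _⟩
    simp [F, formPullback, hfx, image_eq_zero_of_notMem_tsupport hmem]
  have hswap := intervalIntegral_integral_swap (f := fun s x => F (s, x)) hFi
  simp only [hzero, intervalIntegral.integral_zero] at hswap
  simp only [F, formPullback, intervalIntegral.integral_mul_const,
    integral_fderiv_sub_smul_apply hφ, sub_mul] at hswap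
  have hφi := integrable_formPullback_id_add μ hg hc hφ.continuous hφc
  have hφei := integrable_formPullback_id_add μ hg hc (hφe 1).continuous (hφec 1)
  simp only [one_smul] at hφei
  exact (sub_eq_zero.1 ((integral_sub hφi hφei).symm.trans hswap.symm)).symm

theorem integral_formPullback_id_add [Nontrivial E] {g : E → E} (hg : ContDiff ℝ 1 g)
    (hc : HasCompactSupport g) {φ : E → ℝ} (hφ : ContDiff ℝ 1 φ) (hφc : HasCompactSupport φ) :
    ∫ x, formPullback (fun z => z + g z) φ x ∂μ = ∫ x, φ x ∂μ := by
  set f : E → E := fun z => z + g z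
  have hf : Continuous f := continuous_id.add hg.continuous
  obtain ⟨e, he⟩ := exists_disjoint_vadd_of_isCompact
    (hc.isCompact.union (hc.isCompact.image hf)) hφc.isCompact
  have hfar {y : E} (hy : y ∈ tsupport g ∪ f '' tsupport g) : φ (y - e) = 0 := by
    refine image_eq_zero_of_notMem_tsupport fun h => disjoint_left.1 he hy ?_
    exact mem_vadd_set.2 ⟨y - e, h, add_sub_cancel e y⟩
  rw [← integral_formPullback_comp_sub μ hg hc hφ hφc e, ← integral_sub_right_eq_self φ e]
  refine integral_congr_ae (.of_forall fun x => ?_)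
  by_cases hx : x ∈ tsupport g
  · simp [f, formPullback, hfar (.inl hx), hfar (.inr (mem_image_of_mem f hx))]
  · have hfid : f =ᶠ[𝓝 x] id := by
      filter_upwards [notMem_tsupport_iff_eventuallyEq.1 hx] with z hz
      simp [f, hz]
    rw [formPullback_congr hfid, formPullback, fderiv_id, id_eq]
    exact (congrArg _ continuousLinearMap_det_one).trans (mul_one _)

end Degree

section Homogeneous

variable {F G : Type*} [NormedAddCommGroup F] [NormedSpace ℝ F] [NormedAddCommGroup G]
  [NormedSpace ℝ G] {v : F → G}

theorem fderiv_smul_of_homogeneous_two (hv : Differentiable ℝ v)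
    (hhom : ∀ (c : ℝ) x, v (c • x) = c ^ 2 • v x) {c : ℝ} (hc : c ≠ 0) (x : F) :
    fderiv ℝ v (c • x) = c • fderiv ℝ v x := by
  have h : c • c • fderiv ℝ v x = c • fderiv ℝ v (c • x) := by
    rw [smul_smul, ← sq, ← fderiv_const_smul (hv x), ← fderiv_comp_smul]
    exact congrArg (fderiv ℝ · x) (funext fun y => (hhom c y).symm)
  exact (smul_right_injective _ hc h).symm

theorem fderiv_apply_self_of_homogeneous_two {x : F} (hv : DifferentiableAt ℝ v x)
    (hhom : ∀ (c : ℝ) x, v (c • x) = c ^ 2 • v x) : fderiv ℝ v x x = (2 : ℝ) • v x := by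
  have hline : HasDerivAt (fun t : ℝ => t • x) x 1 := by
    simpa using (hasDerivAt_id (1 : ℝ)).smul_const x
  have hchain : HasDerivAt (fun t : ℝ => v (t • x)) (fderiv ℝ v x x) 1 :=
    HasFDerivAt.comp_hasDerivAt (1 : ℝ) (by simpa using hv.hasFDerivAt) hline
  simp only [hhom] at hchain
  exact hchain.unique (by simpa using (hasDerivAt_pow 2 (1 : ℝ)).smul_const (v x))

end Homogeneous

section Parametric

theorem continuous_setIntegral_of_continuousOn {X Y : Type*} [TopologicalSpace X]
    [FirstCountableTopology X] [LocallyCompactSpace X] [TopologicalSpace Y] [T2Space Y]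
    [MeasurableSpace Y] [OpensMeasurableSpace Y] {ν : Measure Y} [IsFiniteMeasureOnCompacts ν]
    {f : X → Y → ℝ} {K : Set Y} (hK : IsCompact K)
    (hf : ContinuousOn f.uncurry (univ ×ˢ K)) : Continuous fun t => ∫ y in K, f t y ∂ν := by
  rw [continuous_iff_continuousAt]
  intro t₀
  obtain ⟨U, hU, hUt₀⟩ := exists_compact_mem_nhds t₀
  obtain ⟨M, hM⟩ := (hU.prod hK).exists_bound_of_continuousOn
    (hf.mono (prod_mono (subset_univ U) subset_rfl))
  refine continuousAt_of_dominated (bound := fun _ => M) (.of_forall fun t => ?_) ?_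
    (integrableOn_const hK.measure_ne_top) ?_
  · exact (hf.comp (by fun_prop : Continuous fun y => (t, y)).continuousOn
      fun y hy => ⟨mem_univ t, hy⟩).aestronglyMeasurable_of_isCompact hK hK.measurableSet
  · filter_upwards [hUt₀] with t ht
    exact ae_restrict_of_forall_mem hK.measurableSet fun y hy => hM (t, y) ⟨ht, hy⟩
  · exact ae_restrict_of_forall_mem hK.measurableSet fun y hy =>
      (hf.comp_continuous (by fun_prop : Continuous fun t => (t, y))
        fun t => ⟨mem_univ t, hy⟩).continuousAt

end Parametric

section Perpendicular

variable {E : Type*} [NormedAddCommGroup E] [InnerProductSpace ℝ E]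

theorem norm_le_norm_add_of_inner_eq_zero {x y : E} (h : inner ℝ x y = 0) : ‖x‖ ≤ ‖x + y‖ := by
  have := norm_add_sq_eq_norm_sq_add_norm_sq_real h
  nlinarith [norm_nonneg x, norm_nonneg (x + y), sq_nonneg ‖y‖]

variable [FiniteDimensional ℝ E] [MeasurableSpace E] [BorelSpace E] (μ : Measure E)
  [μ.IsAddHaarMeasure]

theorem integral_formPullback_id_add_of_inner_eq_zero [Nontrivial E] {v : E → E}
    (hv : ContDiff ℝ 1 v) (horth : ∀ x, inner ℝ (v x) x = 0) {φ : E → ℝ} (hφ : ContDiff ℝ 1 φ)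
    (hφc : HasCompactSupport φ) :
    ∫ z, formPullback (fun z => z + v z) φ z ∂μ = ∫ x, φ x ∂μ := by
  obtain ⟨R, hR, hφR⟩ := hφc.isCompact.isBounded.subset_ball_lt 0 0
  let χ : ContDiffBump (0 : E) := ⟨R, R + 1, hR, by linarith⟩
  have hfar {z : E} (c : ℝ) (hz : R ≤ ‖z‖) : φ (z + c • v z) = 0 := by
    refine image_eq_zero_of_notMem_tsupport fun h => ?_
    have hlt := mem_ball_zero_iff.1 (hφR h)
    have hle : ‖z‖ ≤ ‖z + c • v z‖ := norm_le_norm_add_of_inner_eq_zero (by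
      rw [inner_smul_right, real_inner_comm, horth, mul_zero])
    linarith
  rw [← integral_formPullback_id_add μ (g := fun z => χ z • v z) (χ.contDiff.smul hv)
    χ.hasCompactSupport.smul_right hφ hφc]
  refine integral_congr_ae (.of_forall fun z => ?_)
  rcases lt_or_ge ‖z‖ R with hz | hz
  · refine formPullback_congr ?_ φ
    filter_upwards [χ.eventuallyEq_one_of_mem_ball (mem_ball_zero_iff.2 hz)] with x hx
    simp [hx]
  · exact (formPullback_of_apply_eq_zero (f := fun z => z + v z)
      (by simpa using hfar 1 hz)).trans
      (formPullback_of_apply_eq_zero (f := fun z => z + χ z • v z) (hfar (χ z) hz)).symm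

end Perpendicular

section Central

variable {E : Type*} [NormedAddCommGroup E] [NormedSpace ℝ E]

theorem continuousLinearMap_det_smul (c : ℝ) (A : E →L[ℝ] E) :
    (c • A).det = c ^ Module.finrank ℝ E * A.det :=
  LinearMap.det_smul c (A : E →ₗ[ℝ] E)

theorem continuousLinearMap_det_smul_one (c : ℝ) :
    (c • 1 : E →L[ℝ] E).det = c ^ Module.finrank ℝ E := by
  rw [continuousLinearMap_det_smul, continuousLinearMap_det_one, mul_one]

theorem fderiv_const_smul_id (c : ℝ) (x : E) : fderiv ℝ (fun z : E => c • z) x = c • 1 :=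
  ((hasFDerivAt_id x).const_smul c).fderiv

variable [FiniteDimensional ℝ E] [MeasurableSpace E] [BorelSpace E] (μ : Measure E)
  [μ.IsAddHaarMeasure]

theorem setIntegral_closedBall_formPullback_const_smul {c : ℝ} (hc : c ≠ 0) (φ : E → ℝ) (R : ℝ) :
    ∫ x in closedBall 0 R, formPullback (fun z : E => c • z) φ x ∂μ =
      (SignType.sign (c ^ Module.finrank ℝ E) : SignType) *
        ∫ z in closedBall 0 (|c| * R), φ z ∂μ := by
  have himage : (fun z : E => c • z) '' closedBall 0 R = closedBall 0 (|c| * R) := by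
    rw [image_smul, smul_closedBall' hc, smul_zero, Real.norm_eq_abs]
  rw [← himage]
  refine setIntegral_formPullback μ (f := fun z => c • z) measurableSet_closedBall
    (fun x _ => differentiableAt_fun_id.const_smul c) (smul_right_injective E hc).injOn
    (fun x _ => ?_) φ
  rw [fderiv_const_smul_id, continuousLinearMap_det_smul_one]

theorem setIntegral_closedBall_formPullback_of_even (hn : Odd (Module.finrank ℝ E)) {v : E → E}
    (hv : Differentiable ℝ v) (heven : ∀ x, v (-x) = v x) (φ : E → ℝ) (R : ℝ) :
    ∫ x in closedBall 0 R, formPullback v φ x ∂μ = 0 := by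
  have hreflect (x : E) :
      formPullback (fun z => (-1 : ℝ) • z) (formPullback v φ) x = formPullback v φ x := by
    rw [← formPullback_comp (g := fun z => (-1 : ℝ) • z) (hv _) (by fun_prop)]
    exact formPullback_congr (.of_forall fun z => by simp [heven]) φ
  have hcov := setIntegral_closedBall_formPullback_const_smul μ (neg_ne_zero.2 one_ne_zero)
    (formPullback v φ) R
  simp only [hreflect, hn.neg_one_pow, abs_neg, abs_one, one_mul, Left.sign_neg, sign_one,
    SignType.coe_neg_one, neg_one_mul] at hcov
  linarith

theorem tendsto_setIntegral_closedBall_formPullback_smul_add (hn : Odd (Module.finrank ℝ E))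
    {v : E → E} (hv : ContDiff ℝ 1 v) (heven : ∀ x, v (-x) = v x) {φ : E → ℝ}
    (hφ : Continuous φ) (R : ℝ) :
    Tendsto (fun ε : ℝ => ∫ x in closedBall 0 R, formPullback (fun z => ε • z + v z) φ x ∂μ)
      (𝓝 0) (𝓝 0) := by
  have hdiff : Differentiable ℝ v := hv.differentiable one_ne_zero
  have hfderiv (ε : ℝ) (x : E) : fderiv ℝ (fun z => ε • z + v z) x = ε • 1 + fderiv ℝ v x :=
    (((hasFDerivAt_id x).const_smul ε).add (hdiff x).hasFDerivAt).fderiv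
  have hcont : Continuous fun ε : ℝ =>
      ∫ x in closedBall 0 R, formPullback (fun z => ε • z + v z) φ x ∂μ := by
    refine continuous_setIntegral_of_continuousOn (isCompact_closedBall 0 R)
      (Continuous.continuousOn ?_)
    refine Continuous.mul (hφ.comp ?_) ?_
    · exact (continuous_fst.smul continuous_snd).add (hv.continuous.comp continuous_snd)
    · simp only [hfderiv]
      exact ContinuousLinearMap.continuous_det.comp ((continuous_fst.smul continuous_const).add
        ((hv.continuous_fderiv one_ne_zero).comp continuous_snd))
  simpa only [zero_smul, zero_add, setIntegral_closedBall_formPullback_of_even μ hn hdiff heven]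
    using hcont.tendsto 0

theorem tendsto_setIntegral_closedBall_formPullback (hn : Odd (Module.finrank ℝ E)) {v : E → E}
    (hv : ContDiff ℝ 1 v) (hhom : ∀ (c : ℝ) x, v (c • x) = c ^ 2 • v x) {φ : E → ℝ}
    (hφ : Continuous φ) (R : ℝ) :
    Tendsto (fun δ : ℝ => ∫ z in closedBall 0 (√δ * R),
      formPullback (fun z => z + δ⁻¹ • v z) φ z ∂μ) (𝓝[>] 0) (𝓝 0) := by
  have hsqrt : Tendsto Real.sqrt (𝓝[>] 0) (𝓝 0) :=
    (Real.continuous_sqrt.tendsto' 0 0 Real.sqrt_zero).mono_left nhdsWithin_le_nhds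
  refine Tendsto.congr' ?_ ((tendsto_setIntegral_closedBall_formPullback_smul_add μ hn hv
    (fun x => by simpa using hhom (-1) x) hφ R).comp hsqrt)
  filter_upwards [self_mem_nhdsWithin] with δ hδ
  rw [mem_Ioi] at hδ
  have hε : 0 < √δ := Real.sqrt_pos.2 hδ
  have hrescale : (fun z => √δ • z + v z) = (fun z => z + δ⁻¹ • v z) ∘ fun z => √δ • z := by
    funext z
    simp [hhom, Real.sq_sqrt hδ.le, smul_smul, inv_mul_cancel₀ hδ.ne']
  have hdiff (z : E) : DifferentiableAt ℝ (fun z => z + δ⁻¹ • v z) z :=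
    differentiableAt_id.add ((hv.differentiable one_ne_zero z).const_smul δ⁻¹)
  have hcov := setIntegral_closedBall_formPullback_const_smul μ hε.ne'
    (formPullback (fun z => z + δ⁻¹ • v z) φ) R
  rw [sign_pos (pow_pos hε _), SignType.coe_one, one_mul, abs_of_pos hε] at hcov
  rw [← hcov]
  refine setIntegral_congr_fun measurableSet_closedBall fun x _ => ?_
  simp only [hrescale]
  exact formPullback_comp (hdiff _) (differentiableAt_id.const_smul _) φ

end Central

section Axial

variable {E : Type*} [NormedAddCommGroup E] [InnerProductSpace ℝ E]

/-- The orthogonal projection onto the hyperplane `u⊥`. -/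
noncomputable def perpProj (u : E) : E →L[ℝ] E := (ℝ ∙ u)ᗮ.starProjection

theorem inner_perpProj (u w : E) : inner ℝ u (perpProj u w) = 0 :=
  Submodule.mem_orthogonal_singleton_iff_inner_right.1
    (Submodule.starProjection_apply_mem (ℝ ∙ u)ᗮ w)

theorem perpProj_self (u : E) : perpProj u u = 0 :=
  Submodule.starProjection_orthogonalComplement_singleton_eq_zero u

theorem perpProj_eq_self_iff {u w : E} : perpProj u w = w ↔ inner ℝ u w = 0 := by
  rw [perpProj, Submodule.starProjection_eq_self_iff,
    Submodule.mem_orthogonal_singleton_iff_inner_right]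

theorem perpProj_eq_zero_iff {u w : E} : perpProj u w = 0 ↔ w ∈ ℝ ∙ u := by
  rw [perpProj, Submodule.starProjection_apply_eq_zero_iff, Submodule.orthogonal_orthogonal]

theorem norm_perpProj_le (u w : E) : ‖perpProj u w‖ ≤ ‖w‖ :=
  Submodule.norm_starProjection_apply_le _ w

theorem perpProj_perpProj (u w : E) : perpProj u (perpProj u w) = perpProj u w :=
  perpProj_eq_self_iff.2 (inner_perpProj u w)

theorem inner_smul_add_perpProj {u : E} (hu : ‖u‖ = 1) (w : E) :
    inner ℝ u w • u + perpProj u w = w := by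
  rw [← Submodule.starProjection_unit_singleton ℝ hu]
  exact Submodule.starProjection_add_starProjection_orthogonal w

/-- The linear map that fixes `u` and agrees with `A` on the hyperplane `u⊥`. -/
noncomputable def axialMap (u : E) (A : E →L[ℝ] E) : E →L[ℝ] E :=
  (innerSL ℝ u).smulRight u + A ∘L perpProj u

theorem axialMap_apply (u : E) (A : E →L[ℝ] E) (w : E) :
    axialMap u A w = inner ℝ u w • u + A (perpProj u w) :=
  rfl

theorem inner_axialMap {u : E} (hu : ‖u‖ = 1) {A : E →L[ℝ] E} {w : E}
    (hA : inner ℝ u (A (perpProj u w)) = 0) : inner ℝ u (axialMap u A w) = inner ℝ u w := by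
  rw [axialMap_apply, inner_add_right, hA, inner_smul_right, real_inner_self_eq_norm_sq, hu]
  ring

/-- The stretching by the factor `δ` in all directions orthogonal to `u`. -/
noncomputable def axialScaling (u : E) (δ : ℝ) : E →L[ℝ] E := axialMap u (δ • 1)

theorem axialScaling_apply (u : E) (δ : ℝ) (w : E) :
    axialScaling u δ w = inner ℝ u w • u + δ • perpProj u w :=
  rfl

theorem inner_axialScaling {u : E} (hu : ‖u‖ = 1) (δ : ℝ) (w : E) :
    inner ℝ u (axialScaling u δ w) = inner ℝ u w :=
  inner_axialMap hu (by simp [inner_smul_right, inner_perpProj])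

theorem perpProj_axialScaling (u : E) (δ : ℝ) (w : E) :
    perpProj u (axialScaling u δ w) = δ • perpProj u w := by
  rw [axialScaling_apply, map_add, map_smul, map_smul, perpProj_self, smul_zero, zero_add,
    perpProj_perpProj]

theorem axialScaling_one {u : E} (hu : ‖u‖ = 1) : axialScaling u 1 = 1 := by
  ext w
  rw [axialScaling_apply, one_smul, inner_smul_add_perpProj hu, one_apply_eq_self]

theorem axialScaling_mul {u : E} (hu : ‖u‖ = 1) (a b : ℝ) :
    axialScaling u a * axialScaling u b = axialScaling u (a * b) := by
  ext w
  rw [mul_apply_eq_comp, axialScaling_apply u a, inner_axialScaling hu,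
    perpProj_axialScaling, smul_smul, axialScaling_apply]

theorem leftInverse_axialScaling {u : E} (hu : ‖u‖ = 1) {a b : ℝ} (hab : a * b = 1) :
    Function.LeftInverse (axialScaling u a) (axialScaling u b) := fun w => by
  rw [← mul_apply_eq_comp, axialScaling_mul hu, hab, axialScaling_one hu, one_apply_eq_self]

theorem axialScaling_det_pos {u : E} (hu : ‖u‖ = 1) {δ : ℝ} (hδ : 0 < δ) :
    0 < (axialScaling u δ).det := by
  have hmul (a b : ℝ) : (axialScaling u a).det * (axialScaling u b).det =
      (axialScaling u (a * b)).det := by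
    rw [← continuousLinearMap_det_mul, axialScaling_mul hu]
  have hne : (axialScaling u δ).det ≠ 0 := by
    refine left_ne_zero_of_mul_eq_one (b := (axialScaling u δ⁻¹).det) ?_
    rw [hmul, mul_inv_cancel₀ hδ.ne', axialScaling_one hu, continuousLinearMap_det_one]
  have hsq : (axialScaling u √δ).det * (axialScaling u √δ).det = (axialScaling u δ).det := by
    rw [hmul, Real.mul_self_sqrt hδ.le]
  exact hne.symm.lt_of_le (hsq ▸ mul_self_nonneg _)

theorem injective_axialMap {u : E} (hu : ‖u‖ = 1) {A : E →L[ℝ] E}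
    (horth : ∀ w, inner ℝ u (A w) = 0) (hker : A.ker ≤ ℝ ∙ u) :
    Function.Injective (axialMap u A) := by
  refine (injective_iff_map_eq_zero _).2 fun w hw => ?_
  have haxis : inner ℝ u w = 0 := by rw [← inner_axialMap hu (horth _), hw, inner_zero_right]
  rw [axialMap_apply, haxis, zero_smul, zero_add, perpProj_eq_self_iff.2 haxis] at hw
  rw [← perpProj_eq_self_iff.2 haxis, perpProj_eq_zero_iff]
  exact hker hw

/-- The part of a tube of radius `C` around the ray through `u` at heights between `a` and `M`. -/
def tube (u : E) (a M C : ℝ) : Set E :=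
  {w | inner ℝ u w ∈ Icc a M ∧ ‖perpProj u w‖ ≤ C}

theorem isCompact_tube [FiniteDimensional ℝ E] {u : E} (hu : ‖u‖ = 1) (a M C : ℝ) :
    IsCompact (tube u a M C) := by
  refine isCompact_of_isClosed_isBounded ?_ ?_
  · exact (isClosed_Icc.preimage (innerSL ℝ u).continuous).inter
      (isClosed_le (perpProj u).continuous.norm continuous_const)
  · refine isBounded_iff_forall_norm_le.2 ⟨max |a| |M| + C, fun w hw => ?_⟩
    rw [← inner_smul_add_perpProj hu w]
    refine (norm_add_le _ _).trans (add_le_add ?_ hw.2)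
    rw [norm_smul, hu, mul_one]
    exact abs_le_max_abs_abs hw.1.1 hw.1.2

theorem axialScaling_image_tube {u : E} (hu : ‖u‖ = 1) {δ : ℝ} (hδ : 0 < δ) (a M C : ℝ) :
    axialScaling u δ '' tube u a M C = tube u a M (δ * C) := by
  rw [image_eq_preimage_of_inverse (leftInverse_axialScaling hu (inv_mul_cancel₀ hδ.ne'))
    (leftInverse_axialScaling hu (mul_inv_cancel₀ hδ.ne'))]
  ext w
  change _ ∧ _ ↔ _ ∧ _
  rw [inner_axialScaling hu, perpProj_axialScaling, norm_smul, norm_inv,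
    Real.norm_of_nonneg hδ.le, inv_mul_le_iff₀ hδ]

end Axial

section Blowup

variable {E : Type*} [NormedAddCommGroup E] [InnerProductSpace ℝ E]

/-- The map `z ↦ z + δ⁻¹ v(z)` after the rescaling `z = axialScaling u δ w`, with the quotient
`δ⁻¹ v(axialScaling u δ w)` written as an integral that makes sense for `δ = 0`. -/
noncomputable def blowup (v : E → E) (u : E) (δ : ℝ) (w : E) : E :=
  axialScaling u δ w +
    ∫ s in (0 : ℝ)..1, fderiv ℝ v (axialScaling u (s * δ) w) (perpProj u w)

variable {v : E → E} {u : E}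

theorem hasDerivAt_axialScaling (u w : E) (t : ℝ) :
    HasDerivAt (fun t => axialScaling u t w) (perpProj u w) t := by
  simpa [axialScaling_apply] using
    ((hasDerivAt_id t).smul_const (perpProj u w)).const_add (inner ℝ u w • u)

theorem continuous_axialScaling_apply (u : E) :
    Continuous fun q : ℝ × E => axialScaling u q.1 q.2 := by
  simp only [axialScaling_apply]
  fun_prop

theorem continuous_fderiv_axialScaling_perpProj (hv : ContDiff ℝ 1 v) :
    Continuous fun q : (ℝ × E) × ℝ =>
      fderiv ℝ v (axialScaling u (q.2 * q.1.1) q.1.2) (perpProj u q.1.2) :=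
  ((hv.continuous_fderiv one_ne_zero).comp ((continuous_axialScaling_apply u).comp
    (by fun_prop : Continuous fun q : (ℝ × E) × ℝ => (q.2 * q.1.1, q.1.2)))).clm_apply
    (by fun_prop)

theorem continuous_blowup (hv : ContDiff ℝ 1 v) :
    Continuous fun q : ℝ × E => blowup v u q.1 q.2 := by
  have h := continuous_fderiv_axialScaling_perpProj (u := u) hv
  exact (continuous_axialScaling_apply u).add
    (intervalIntegral.continuous_parametric_intervalIntegral_of_continuous' h 0 1)

theorem smul_integral_fderiv_axialScaling [CompleteSpace E] (hv : ContDiff ℝ 1 v)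
    (hhom : ∀ (c : ℝ) x, v (c • x) = c ^ 2 • v x) (hvu : v u = 0) (δ : ℝ) (w : E) :
    δ • ∫ s in (0 : ℝ)..1, fderiv ℝ v (axialScaling u (s * δ) w) (perpProj u w) =
      v (axialScaling u δ w) := by
  have hderiv (s : ℝ) (_ : s ∈ uIcc (0 : ℝ) 1) : HasDerivAt (fun s => v (axialScaling u (s * δ) w))
      (δ • fderiv ℝ v (axialScaling u (s * δ) w) (perpProj u w)) s := by
    have hpath : HasDerivAt (fun s => axialScaling u (s * δ) w) (δ • perpProj u w) s :=
      HasDerivAt.scomp (h := fun s => s * δ) s (hasDerivAt_axialScaling u w (s * δ))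
        (hasDerivAt_mul_const δ)
    rw [← map_smul]
    exact (hv.differentiable one_ne_zero _).hasFDerivAt.comp_hasDerivAt s hpath
  have hcont := (continuous_fderiv_axialScaling_perpProj (u := u) hv).comp
    (Continuous.prodMk_right (δ, w))
  rw [← intervalIntegral.integral_smul, intervalIntegral.integral_eq_sub_of_hasDerivAt hderiv
    ((hcont.const_smul δ).intervalIntegrable 0 1)]
  simp [axialScaling_apply, hhom, hvu]

theorem blowup_of_ne_zero [CompleteSpace E] (hv : ContDiff ℝ 1 v)
    (hhom : ∀ (c : ℝ) x, v (c • x) = c ^ 2 • v x) (hvu : v u = 0) {δ : ℝ} (hδ : δ ≠ 0) :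
    blowup v u δ = (fun z => z + δ⁻¹ • v z) ∘ axialScaling u δ := by
  funext w
  rw [blowup, Function.comp_apply, ← smul_integral_fderiv_axialScaling hv hhom hvu,
    inv_smul_smul₀ hδ]

theorem axialScaling_zero (u w : E) : axialScaling u 0 w = inner ℝ u w • u := by
  rw [axialScaling_apply, zero_smul, add_zero]

theorem blowup_zero_sub_axialScaling [CompleteSpace E] (hv : Differentiable ℝ v)
    (hhom : ∀ (c : ℝ) x, v (c • x) = c ^ 2 • v x) {w : E} (hw : inner ℝ u w ≠ 0) :
    blowup v u 0 w - axialScaling u 0 w = inner ℝ u w • fderiv ℝ v u (perpProj u w) := by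
  simp [blowup, axialScaling_zero, fderiv_smul_of_homogeneous_two hv hhom hw]

theorem blowup_zero_apply [CompleteSpace E] (hv : Differentiable ℝ v)
    (hhom : ∀ (c : ℝ) x, v (c • x) = c ^ 2 • v x) (hu : ‖u‖ = 1) {w : E} (hw : inner ℝ u w ≠ 0) :
    blowup v u 0 w = axialMap u (fderiv ℝ v u) (axialScaling u (inner ℝ u w) w) := by
  rw [sub_eq_iff_eq_add'.1 (blowup_zero_sub_axialScaling hv hhom hw), axialScaling_zero,
    axialMap_apply, inner_axialScaling hu, perpProj_axialScaling, map_smul]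

/-- The derivative of `blowup v u δ` at `w`, in a form that is continuous up to `δ = 0`. -/
noncomputable def blowupDeriv (v : E → E) (u : E) (δ : ℝ) (w : E) : E →L[ℝ] E :=
  axialMap u (δ • 1 + fderiv ℝ v (axialScaling u δ w)) + (innerSL ℝ u).smulRight
    ((inner ℝ u w)⁻¹ • ((2 : ℝ) • (blowup v u δ w - axialScaling u δ w) -
      fderiv ℝ v (axialScaling u δ w) (perpProj u w)))

theorem continuousOn_blowupDeriv (hv : ContDiff ℝ 1 v) :
    ContinuousOn (fun q : ℝ × E => blowupDeriv v u q.1 q.2) {q | inner ℝ u q.2 ≠ 0} := by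
  have haxis : Continuous fun q : ℝ × E => axialScaling u q.1 q.2 :=
    continuous_axialScaling_apply u
  have hD : Continuous fun q : ℝ × E => fderiv ℝ v (axialScaling u q.1 q.2) :=
    (hv.continuous_fderiv one_ne_zero).comp haxis
  have hb : Continuous fun q : ℝ × E => blowup v u q.1 q.2 := continuous_blowup hv
  have hinner : Continuous fun q : ℝ × E => inner ℝ u q.2 := by fun_prop
  unfold blowupDeriv axialMap
  refine ContinuousOn.add (Continuous.continuousOn (by fun_prop)) ?_
  refine (ContinuousLinearMap.smulRightL ℝ E E (innerSL ℝ u)).continuous.comp_continuousOn ?_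
  exact (hinner.continuousOn.inv₀ fun q hq => hq).smul
    (((hb.sub haxis).const_smul 2).sub
      (hD.clm_apply ((perpProj u).continuous.comp continuous_snd))).continuousOn

theorem hasFDerivAt_blowup_of_ne_zero [CompleteSpace E] (hv : ContDiff ℝ 1 v)
    (hhom : ∀ (c : ℝ) x, v (c • x) = c ^ 2 • v x) (hvu : v u = 0) {δ : ℝ}
    (hδ : δ ≠ 0) {w : E} (hw : inner ℝ u w ≠ 0) :
    HasFDerivAt (blowup v u δ) (blowupDeriv v u δ w) w := by
  set x := axialScaling u δ w with hx
  have hdiff : DifferentiableAt ℝ v x := hv.differentiable one_ne_zero x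
  have heuler : inner ℝ u w • fderiv ℝ v x u + δ • fderiv ℝ v x (perpProj u w) =
      (2 : ℝ) • v x := by
    rw [← fderiv_apply_self_of_homogeneous_two hdiff hhom]
    nth_rw 4 [hx]
    rw [axialScaling_apply, map_add, map_smul, map_smul]
  have hintegral : blowup v u δ w - x = δ⁻¹ • v x := by
    rw [blowup_of_ne_zero hv hhom hvu hδ, Function.comp_apply, ← hx, add_sub_cancel_left]
  have hderiv : blowupDeriv v u δ w = (1 + δ⁻¹ • fderiv ℝ v x) ∘L axialScaling u δ := by
    ext h
    simp only [blowupDeriv, ← hx, hintegral]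
    simp only [add_apply, axialMap_apply, smul_apply, one_apply_eq_self,
      ContinuousLinearMap.smulRight_apply, coe_innerSL_apply, ContinuousLinearMap.add_comp,
      ContinuousLinearMap.smul_comp, ContinuousLinearMap.comp_apply, axialScaling_apply, map_add,
      map_smul, smul_add]
    linear_combination (norm := skip) (-(δ⁻¹ * (inner ℝ u w)⁻¹ * inner ℝ u h)) • heuler
    match_scalars <;> field_simp <;> ring
  rw [hderiv, blowup_of_ne_zero hv hhom hvu hδ]
  exact ((hasFDerivAt_id x).add (hdiff.hasFDerivAt.const_smul δ⁻¹)).comp w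
    (axialScaling u δ).hasFDerivAt

theorem hasFDerivAt_axialScaling_inner (u w : E) :
    HasFDerivAt (fun w => axialScaling u (inner ℝ u w) w)
      (axialScaling u (inner ℝ u w) + (innerSL ℝ u).smulRight (perpProj u w)) w := by
  have h := ((innerSL ℝ u).hasFDerivAt (x := w)).smul_const u |>.add
    (((innerSL ℝ u).hasFDerivAt (x := w)).smul (perpProj u).hasFDerivAt)
  refine h.congr_fderiv ?_
  ext
  simp only [coe_innerSL_apply, add_apply, ContinuousLinearMap.smulRight_apply, smul_apply,
    axialScaling_apply]
  abel

theorem hasFDerivAt_blowup_zero [CompleteSpace E] (hv : Differentiable ℝ v)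
    (hhom : ∀ (c : ℝ) x, v (c • x) = c ^ 2 • v x) (hu : ‖u‖ = 1) {w : E}
    (hw : inner ℝ u w ≠ 0) :
    HasFDerivAt (blowup v u 0) (axialMap u (fderiv ℝ v u) ∘L
      (axialScaling u (inner ℝ u w) + (innerSL ℝ u).smulRight (perpProj u w))) w := by
  refine ((axialMap u (fderiv ℝ v u)).hasFDerivAt.comp w
    (hasFDerivAt_axialScaling_inner u w)).congr_of_eventuallyEq ?_
  filter_upwards [(innerSL ℝ u).continuous.continuousAt.eventually_ne hw] with z hz
  exact blowup_zero_apply hv hhom hu hz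

theorem blowupDeriv_zero [CompleteSpace E] (hv : Differentiable ℝ v)
    (hhom : ∀ (c : ℝ) x, v (c • x) = c ^ 2 • v x) (hu : ‖u‖ = 1) {w : E}
    (hw : inner ℝ u w ≠ 0) : blowupDeriv v u 0 w = axialMap u (fderiv ℝ v u) ∘L
      (axialScaling u (inner ℝ u w) + (innerSL ℝ u).smulRight (perpProj u w)) := by
  ext h
  rw [blowupDeriv, blowup_zero_sub_axialScaling hv hhom hw]
  simp only [axialScaling_zero, fderiv_smul_of_homogeneous_two hv hhom hw]
  simp only [zero_smul, zero_add, smul_apply, add_apply, axialMap_apply,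
    ContinuousLinearMap.smulRight_apply, innerSL_apply_apply, ContinuousLinearMap.comp_apply,
    axialScaling_apply, map_add, map_smul, map_zero, hu, real_inner_self_eq_norm_sq,
    inner_perpProj, perpProj_self, perpProj_perpProj]
  match_scalars <;> field_simp
  ring

theorem hasFDerivAt_blowup [CompleteSpace E] (hv : ContDiff ℝ 1 v)
    (hhom : ∀ (c : ℝ) x, v (c • x) = c ^ 2 • v x) (hvu : v u = 0) (hu : ‖u‖ = 1) (δ : ℝ)
    {w : E} (hw : inner ℝ u w ≠ 0) :
    HasFDerivAt (blowup v u δ) (blowupDeriv v u δ w) w := by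
  rcases eq_or_ne δ 0 with rfl | hδ
  · have hdiff := hv.differentiable one_ne_zero
    exact blowupDeriv_zero hdiff hhom hu hw ▸ hasFDerivAt_blowup_zero hdiff hhom hu hw
  · exact hasFDerivAt_blowup_of_ne_zero hv hhom hvu hδ hw

theorem det_axialScaling_add_smulRight_pos [FiniteDimensional ℝ E] (hu : ‖u‖ = 1) {r : ℝ}
    (hr : 0 < r) (w : E) :
    0 < (axialScaling u r + (innerSL ℝ u).smulRight (perpProj u w)).det := by
  have hfactor : axialScaling u r + (innerSL ℝ u).smulRight (perpProj u w) =
      (1 + (innerSL ℝ u).smulRight (perpProj u w)) * axialScaling u r := by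
    ext h
    simp [inner_axialScaling hu]
  rw [hfactor, continuousLinearMap_det_mul, det_one_add_smulRight, innerSL_apply_apply,
    inner_perpProj, add_zero, one_mul]
  exact axialScaling_det_pos hu hr

theorem inner_fderiv_eq_zero_of_inner_eq_zero (hv : DifferentiableAt ℝ v u)
    (horth : ∀ x, inner ℝ (v x) x = 0) (hvu : v u = 0) (h : E) :
    inner ℝ u (fderiv ℝ v u h) = 0 := by
  have hderiv := (hv.hasFDerivAt.inner ℝ (hasFDerivAt_id u)).unique
    (by simpa only [id_eq, horth] using hasFDerivAt_const (0 : ℝ) u)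
  simpa [hvu, real_inner_comm] using congrArg (· h) hderiv

variable [FiniteDimensional ℝ E]

theorem inner_blowup_zero (hv : Differentiable ℝ v)
    (hhom : ∀ (c : ℝ) x, v (c • x) = c ^ 2 • v x) (hu : ‖u‖ = 1)
    (horth : ∀ h, inner ℝ u (fderiv ℝ v u h) = 0) {w : E} (hw : inner ℝ u w ≠ 0) :
    inner ℝ u (blowup v u 0 w) = inner ℝ u w := by
  rw [blowup_zero_apply hv hhom hu hw, inner_axialMap hu (horth _), inner_axialScaling hu]

theorem bijOn_blowup_zero (hv : Differentiable ℝ v)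
    (hhom : ∀ (c : ℝ) x, v (c • x) = c ^ 2 • v x) (hu : ‖u‖ = 1)
    (horth : ∀ h, inner ℝ u (fderiv ℝ v u h) = 0)
    (hS : Function.Injective (axialMap u (fderiv ℝ v u))) :
    BijOn (blowup v u 0) {w | 0 < inner ℝ u w} {w | 0 < inner ℝ u w} := by
  have hzero {w : E} (hw : 0 < inner ℝ u w) := blowup_zero_apply hv hhom hu hw.ne'
  have hinner {w : E} (hw : 0 < inner ℝ u w) : inner ℝ u (blowup v u 0 w) = inner ℝ u w :=
    inner_blowup_zero hv hhom hu horth hw.ne'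
  refine ⟨fun w hw => hw.trans_eq (hinner hw).symm, fun w₁ hw₁ w₂ hw₂ h => ?_, fun y hy => ?_⟩
  · have haxis : inner ℝ u w₁ = inner ℝ u w₂ := by rw [← hinner hw₁, h, hinner hw₂]
    rw [hzero hw₁, hzero hw₂, haxis] at h
    exact (leftInverse_axialScaling hu (inv_mul_cancel₀ hw₂.ne')).injective (hS h)
  · obtain ⟨z, rfl⟩ := LinearMap.injective_iff_surjective.1 hS y
    have haxis : inner ℝ u (axialMap u (fderiv ℝ v u) z) = inner ℝ u z :=
      inner_axialMap hu (horth _)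
    have hz : 0 < inner ℝ u z := haxis ▸ hy
    have hw : inner ℝ u (axialScaling u (inner ℝ u z)⁻¹ z) = inner ℝ u z :=
      inner_axialScaling hu _ z
    have hwpos := hz.trans_eq hw.symm
    refine ⟨axialScaling u (inner ℝ u z)⁻¹ z, hwpos, ?_⟩
    rw [hzero hwpos, hw, leftInverse_axialScaling hu (mul_inv_cancel₀ hz.ne') z]
    rfl

theorem exists_forall_norm_perpProj_le_of_blowup_zero (hv : Differentiable ℝ v)
    (hhom : ∀ (c : ℝ) x, v (c • x) = c ^ 2 • v x) (hu : ‖u‖ = 1)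
    (hS : Function.Injective (axialMap u (fderiv ℝ v u))) {a : ℝ} (ha : 0 < a) (M : ℝ) :
    ∃ C, ∀ w, a ≤ inner ℝ u w → ‖blowup v u 0 w‖ ≤ M → ‖perpProj u w‖ ≤ C := by
  obtain ⟨K, -, hK⟩ := LinearMap.exists_antilipschitzWith
    (axialMap u (fderiv ℝ v u) : E →ₗ[ℝ] E) (LinearMap.ker_eq_bot.2 hS)
  refine ⟨a⁻¹ * (K * M), fun w hw hM => (le_inv_mul_iff₀ ha).2 ?_⟩
  have hr : 0 < inner ℝ u w := ha.trans_le hw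
  rw [blowup_zero_apply hv hhom hu hr.ne'] at hM
  calc a * ‖perpProj u w‖ ≤ inner ℝ u w * ‖perpProj u w‖ := by gcongr
    _ = ‖perpProj u (axialScaling u (inner ℝ u w) w)‖ := by
      rw [perpProj_axialScaling, norm_smul, Real.norm_of_nonneg hr.le]
    _ ≤ ‖axialScaling u (inner ℝ u w) w‖ := norm_perpProj_le _ _
    _ ≤ K * ‖axialMap u (fderiv ℝ v u) (axialScaling u (inner ℝ u w) w)‖ := by
      simpa using hK.le_mul_dist (axialScaling u (inner ℝ u w) w) 0
    _ ≤ K * M := by gcongr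

variable [MeasurableSpace E] [BorelSpace E] (μ : Measure E) [μ.IsAddHaarMeasure]

theorem setIntegral_formPullback_blowup_zero (hv : Differentiable ℝ v)
    (hhom : ∀ (c : ℝ) x, v (c • x) = c ^ 2 • v x) (hu : ‖u‖ = 1)
    (horth : ∀ h, inner ℝ u (fderiv ℝ v u h) = 0)
    (hS : Function.Injective (axialMap u (fderiv ℝ v u))) (φ : E → ℝ) :
    ∫ w in {w | 0 < inner ℝ u w}, formPullback (blowup v u 0) φ w ∂μ =
      SignType.sign (axialMap u (fderiv ℝ v u)).det * ∫ y in {w | 0 < inner ℝ u w}, φ y ∂μ := by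
  have hbij := bijOn_blowup_zero hv hhom hu horth hS
  have hderiv {w : E} (hw : 0 < inner ℝ u w) := hasFDerivAt_blowup_zero hv hhom hu hw.ne'
  have hopen : IsOpen {w : E | 0 < inner ℝ u w} :=
    isOpen_lt continuous_const (innerSL ℝ u).continuous
  rw [setIntegral_formPullback μ hopen.measurableSet
    (fun w hw => (hderiv hw).differentiableAt) hbij.injOn (fun w hw => ?_) φ, hbij.image_eq]
  rw [(hderiv hw).fderiv]
  change SignType.sign (axialMap u (fderiv ℝ v u) * _).det = _
  rw [continuousLinearMap_det_mul, sign_mul,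
    sign_pos (det_axialScaling_add_smulRight_pos hu hw w), mul_one]

theorem setIntegral_tube_formPullback (hv : ContDiff ℝ 1 v)
    (hhom : ∀ (c : ℝ) x, v (c • x) = c ^ 2 • v x) (hvu : v u = 0) (hu : ‖u‖ = 1) {δ : ℝ}
    (hδ : 0 < δ) (a M C : ℝ) (φ : E → ℝ) :
    ∫ z in tube u a M (δ * C), formPullback (fun z => z + δ⁻¹ • v z) φ z ∂μ =
      ∫ w in tube u a M C, formPullback (blowup v u δ) φ w ∂μ := by
  have hdiff (z : E) : DifferentiableAt ℝ (fun z => z + δ⁻¹ • v z) z :=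
    differentiableAt_id.add ((hv.differentiable one_ne_zero z).const_smul δ⁻¹)
  have hcov := setIntegral_formPullback μ (isCompact_tube hu a M C).measurableSet
    (fun w _ => (axialScaling u δ).differentiableAt)
    (leftInverse_axialScaling hu (inv_mul_cancel₀ hδ.ne')).injective.injOn
    (fun w _ => by rw [ContinuousLinearMap.fderiv, sign_pos (axialScaling_det_pos hu hδ)])
    (formPullback (fun z => z + δ⁻¹ • v z) φ)
  rw [axialScaling_image_tube hu hδ, SignType.coe_one, one_mul] at hcov
  rw [← hcov, blowup_of_ne_zero hv hhom hvu hδ.ne']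
  refine integral_congr_ae (.of_forall fun w => ?_)
  exact (formPullback_comp (hdiff _) (axialScaling u δ).differentiableAt φ).symm

theorem continuous_setIntegral_tube_formPullback_blowup (hv : ContDiff ℝ 1 v)
    (hhom : ∀ (c : ℝ) x, v (c • x) = c ^ 2 • v x) (hvu : v u = 0) (hu : ‖u‖ = 1) {a : ℝ}
    (ha : 0 < a) (M C : ℝ) {φ : E → ℝ} (hφ : Continuous φ) :
    Continuous fun δ => ∫ w in tube u a M C, formPullback (blowup v u δ) φ w ∂μ := by
  have haxis {w : E} (hw : w ∈ tube u a M C) : inner ℝ u w ≠ 0 := (ha.trans_le hw.1.1).ne'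
  refine continuous_setIntegral_of_continuousOn (isCompact_tube hu a M C) (ContinuousOn.congr
    (f := fun q : ℝ × E => φ (blowup v u q.1 q.2) * (blowupDeriv v u q.1 q.2).det) ?_ ?_)
  · exact (hφ.comp (continuous_blowup hv)).continuousOn.mul
      (ContinuousLinearMap.continuous_det.comp_continuousOn
        ((continuousOn_blowupDeriv hv).mono fun q hq => haxis hq.2))
  · intro q hq
    simp only [Function.uncurry, formPullback,
      (hasFDerivAt_blowup hv hhom hvu hu q.1 (haxis hq.2)).fderiv]

theorem eventually_setIntegral_tube_formPullback_blowup_zero (hv : Differentiable ℝ v)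
    (hhom : ∀ (c : ℝ) x, v (c • x) = c ^ 2 • v x) (hu : ‖u‖ = 1)
    (horth : ∀ h, inner ℝ u (fderiv ℝ v u h) = 0)
    (hS : Function.Injective (axialMap u (fderiv ℝ v u))) {a M : ℝ} (ha : 0 < a) {φ : E → ℝ}
    (hsupp : ∀ y, φ y ≠ 0 → a ≤ inner ℝ u y ∧ ‖y‖ ≤ M) :
    ∀ᶠ C in atTop, ∫ w in tube u a M C, formPullback (blowup v u 0) φ w ∂μ =
      SignType.sign (axialMap u (fderiv ℝ v u)).det * ∫ y, φ y ∂μ := by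
  obtain ⟨C₀, hC₀⟩ := exists_forall_norm_perpProj_le_of_blowup_zero hv hhom hu hS ha M
  filter_upwards [eventually_ge_atTop C₀] with C hC
  have hopen : IsOpen {w : E | 0 < inner ℝ u w} :=
    isOpen_lt continuous_const (innerSL ℝ u).continuous
  rw [← setIntegral_eq_integral_of_forall_compl_eq_zero (f := φ)
    (s := {w | 0 < inner ℝ u w}), ← setIntegral_formPullback_blowup_zero μ hv hhom hu horth hS]
  · refine (setIntegral_eq_of_subset_of_forall_sdiff_eq_zero hopen.measurableSet
      (fun w hw => ha.trans_le hw.1.1) fun w hw => formPullback_of_apply_eq_zero ?_).symm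
    by_contra hne
    obtain ⟨haw, hMw⟩ := hsupp _ hne
    have hinner := inner_blowup_zero hv hhom hu horth (ne_of_gt hw.1)
    have hle : inner ℝ u w ≤ M := hinner ▸
      ((real_inner_le_norm _ _).trans_eq (by rw [hu, one_mul])).trans hMw
    rw [hinner] at haw
    exact hw.2 ⟨⟨haw, hle⟩, (hC₀ w haw hMw).trans hC⟩
  · intro y hy
    by_contra hne
    exact hy (ha.trans_le (hsupp y hne).1)

theorem eventually_tendsto_setIntegral_tube_formPullback (hv : ContDiff ℝ 1 v)
    (hhom : ∀ (c : ℝ) x, v (c • x) = c ^ 2 • v x) (hvu : v u = 0) (hu : ‖u‖ = 1)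
    (horth : ∀ h, inner ℝ u (fderiv ℝ v u h) = 0)
    (hS : Function.Injective (axialMap u (fderiv ℝ v u))) {a M : ℝ} (ha : 0 < a) {φ : E → ℝ}
    (hφ : Continuous φ) (hsupp : ∀ y, φ y ≠ 0 → a ≤ inner ℝ u y ∧ ‖y‖ ≤ M) :
    ∀ᶠ C in atTop, Tendsto
      (fun δ => ∫ z in tube u a M (δ * C), formPullback (fun z => z + δ⁻¹ • v z) φ z ∂μ)
      (𝓝[>] 0) (𝓝 (SignType.sign (axialMap u (fderiv ℝ v u)).det * ∫ y, φ y ∂μ)) := by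
  filter_upwards [eventually_setIntegral_tube_formPullback_blowup_zero μ
    (hv.differentiable one_ne_zero) hhom hu horth hS ha hsupp] with C hC
  refine hC ▸ Tendsto.congr' ?_
    ((continuous_setIntegral_tube_formPullback_blowup μ hv hhom hvu hu ha M C hφ).tendsto 0
      |>.mono_left nhdsWithin_le_nhds)
  filter_upwards [self_mem_nhdsWithin] with δ hδ
  exact (setIntegral_tube_formPullback μ hv hhom hvu hu hδ a M C φ).symm

end Blowup

section Localization

variable {E : Type*} [NormedAddCommGroup E] [InnerProductSpace ℝ E]

theorem perpProj_congr {u x : E} (hx : x ≠ 0) (hxu : x ∈ ℝ ∙ u) : perpProj x = perpProj u := by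
  obtain ⟨c, rfl⟩ := Submodule.mem_span_singleton.1 hxu
  have hc : c ≠ 0 := fun hc => hx (by rw [hc, zero_smul])
  simp only [perpProj, Submodule.span_singleton_smul_eq (IsUnit.mk0 c hc) u]

theorem mul_norm_perpProj_le_of_le_abs_inner {u u' : E} (hu : ‖u‖ = 1) {a : ℝ} {z : E}
    (hz : a ≤ |inner ℝ u z|) :
    a * ‖perpProj u' u‖ ≤ ‖perpProj u' z‖ + ‖perpProj u z‖ := by
  calc a * ‖perpProj u' u‖ ≤ ‖perpProj u' (inner ℝ u z • u)‖ := by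
        rw [map_smul, norm_smul]
        exact mul_le_mul_of_nonneg_right hz (norm_nonneg _)
    _ = ‖perpProj u' z - perpProj u' (perpProj u z)‖ := by
        rw [← map_sub]
        congr 2
        exact eq_sub_of_add_eq (inner_smul_add_perpProj hu z)
    _ ≤ ‖perpProj u' z‖ + ‖perpProj u z‖ :=
        (norm_sub_le _ _).trans (add_le_add_right (norm_perpProj_le _ _) _)

theorem eventually_disjoint_tube {u u' : E} (hu : ‖u‖ = 1) (huu' : u ∉ ℝ ∙ u') {a : ℝ}
    (ha : 0 < a) (M : ℝ) :
    ∀ᶠ ε in 𝓝 (0 : ℝ), Disjoint (tube u a M ε) (tube u' a M ε) := by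
  have hpos : 0 < a * ‖perpProj u' u‖ :=
    mul_pos ha (norm_pos_iff.2 (mt perpProj_eq_zero_iff.1 huu'))
  have hsmall : ∀ᶠ ε : ℝ in 𝓝 0, ε + ε < a * ‖perpProj u' u‖ :=
    ContinuousAt.eventually_lt (by fun_prop) (by fun_prop) (by simpa using hpos)
  filter_upwards [hsmall] with ε hε
  refine disjoint_left.2 fun z hz hz' => hε.not_ge ?_
  exact (mul_norm_perpProj_le_of_le_abs_inner hu (hz.1.1.trans (le_abs_self _))).trans
    (add_le_add hz'.2 hz.2)

theorem disjoint_closedBall_tube {u : E} (hu : ‖u‖ = 1) {a r : ℝ} (hr : r < a) (M C : ℝ) :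
    Disjoint (closedBall 0 r) (tube u a M C) := by
  refine disjoint_left.2 fun z hz hz' => (hr.trans_le hz'.1.1).not_ge ?_
  calc inner ℝ u z ≤ ‖u‖ * ‖z‖ := real_inner_le_norm u z
    _ ≤ r := by rw [hu, one_mul]; exact mem_closedBall_zero_iff.1 hz

theorem le_inner_of_inner_eq_norm_sq {u f z : E} (hu : ‖u‖ = 1) {a M : ℝ} (ha : 0 < a)
    (hz : z ≠ 0) (hfz : inner ℝ f z = ‖z‖ ^ 2) (hf : ‖f‖ ≤ M) (huf : 4 * a ≤ inner ℝ u f)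
    (hperp : M * ‖perpProj u z‖ ≤ a * ‖z‖) : a ≤ inner ℝ u z := by
  have hpos : 0 < ‖z‖ := norm_pos_iff.2 hz
  have huf_le : inner ℝ u f ≤ M := by
    have h := real_inner_le_norm u f
    rw [hu, one_mul] at h
    exact h.trans hf
  have hquarter : ‖perpProj u z‖ ≤ ‖z‖ / 4 := by nlinarith [norm_nonneg (perpProj u z)]
  have habs : ‖z‖ ≤ |inner ℝ u z| + ‖perpProj u z‖ := by
    calc ‖z‖ = ‖inner ℝ u z • u + perpProj u z‖ := by rw [inner_smul_add_perpProj hu]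
      _ ≤ |inner ℝ u z| + ‖perpProj u z‖ := by
        simpa [norm_smul, hu] using norm_add_le (inner ℝ u z • u) (perpProj u z)
  have hsplit : ‖z‖ ^ 2 = inner ℝ u z * inner ℝ u f + inner ℝ f (perpProj u z) := by
    rw [← hfz, real_inner_comm f u, ← inner_smul_right, ← inner_add_right,
      inner_smul_add_perpProj hu]
  have herr : |inner ℝ f (perpProj u z)| ≤ a * ‖z‖ :=
    (abs_real_inner_le_norm _ _).trans
      ((mul_le_mul_of_nonneg_right hf (norm_nonneg _)).trans hperp)
  obtain ⟨hlower, hupper⟩ := abs_le.1 herr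
  rcases le_total 0 (inner ℝ u z) with hnonneg | hnonpos
  · rw [abs_of_nonneg hnonneg] at habs
    have hnorm : 2 * a ≤ ‖z‖ := by
      refine le_of_mul_le_mul_right ?_ hpos
      nlinarith [mul_le_mul_of_nonneg_left huf hnonneg]
    linarith
  · rw [abs_of_nonpos hnonpos] at habs
    nlinarith [mul_le_mul_of_nonpos_left huf hnonpos, mul_pos ha hpos, pow_pos hpos 2]

theorem sq_norm_le_or_mem_tube {u f z : E} (hu : ‖u‖ = 1) {a b M : ℝ} (ha : 0 < a)
    (hb : 0 ≤ b) (hfz : inner ℝ f z = ‖z‖ ^ 2) (hf : ‖f‖ ≤ M) (huf : 4 * a ≤ inner ℝ u f)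
    (hperp : ‖z‖ * ‖perpProj u z‖ ≤ b) :
    ‖z‖ ^ 2 ≤ b * (M / a) ∨ z ∈ tube u a M (b / a) := by
  have hM : 0 ≤ M := (norm_nonneg f).trans hf
  rcases eq_or_ne z 0 with rfl | hz
  · exact .inl (by rw [norm_zero, zero_pow two_ne_zero]; positivity)
  have hpos : 0 < ‖z‖ := norm_pos_iff.2 hz
  rcases le_total (M * ‖perpProj u z‖) (a * ‖z‖) with hnear | hfar
  · have hzM : ‖z‖ ≤ M := by
      refine le_of_mul_le_mul_right ?_ hpos
      rw [← pow_two, ← hfz]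
      exact (real_inner_le_norm f z).trans (mul_le_mul_of_nonneg_right hf hpos.le)
    have huz : inner ℝ u z ≤ ‖z‖ := by simpa [hu] using real_inner_le_norm u z
    have haz : a ≤ inner ℝ u z := le_inner_of_inner_eq_norm_sq hu ha hz hfz hf huf hnear
    refine .inr ⟨⟨haz, huz.trans hzM⟩, (le_div_iff₀' ha).2 ?_⟩
    exact (mul_le_mul_of_nonneg_right (haz.trans huz) (norm_nonneg _)).trans hperp
  · refine .inl ?_
    rw [← mul_div_assoc, le_div_iff₀ ha]
    nlinarith [norm_nonneg z]

theorem tube_subset_tube {u : E} {a M C C' : ℝ} (h : C ≤ C') : tube u a M C ⊆ tube u a M C' :=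
  fun _ hz => ⟨hz.1, hz.2.trans h⟩

variable {v : E → E}

theorem exists_eventually_norm_perpProj_le [FiniteDimensional ℝ E] {x : E} (hx : ‖x‖ = 1)
    {A : E →L[ℝ] E} (hv : HasStrictFDerivAt v A x) (hzero : ∀ t : ℝ, v (t • x) = 0)
    (hA : Function.Injective (axialMap x A)) :
    ∃ K > 0, ∀ᶠ z in 𝓝 x, ‖perpProj x z‖ ≤ K * ‖v z‖ := by
  obtain ⟨K, hK, hanti⟩ :=
    (axialMap x A).toLinearMap.exists_antilipschitzWith (LinearMap.ker_eq_bot.2 hA)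
  have hbound (z : E) : ‖perpProj x z‖ ≤ K * ‖A (perpProj x z)‖ := by
    have h := hanti.le_mul_norm (map_zero _) (perpProj x z)
    rwa [ContinuousLinearMap.coe_coe, axialMap_apply, inner_perpProj, zero_smul, zero_add,
      perpProj_perpProj] at h
  have hK' : (0 : ℝ) < K := hK
  have hproj : Tendsto (fun z => (z, inner ℝ x z • x)) (𝓝 x) (𝓝 (x, x)) := by
    have hcont : Continuous fun z => (z, inner ℝ x z • x) := by fun_prop
    simpa [hx] using hcont.tendsto x
  have hstrict := hproj.eventually (hv.isLittleO.def (show 0 < (2 * (K : ℝ))⁻¹ by positivity))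
  refine ⟨2 * K, by positivity, hstrict.mono fun z hz => ?_⟩
  have hsub : z - inner ℝ x z • x = perpProj x z :=
    sub_eq_of_eq_add' (inner_smul_add_perpProj hx z).symm
  rw [hzero, sub_zero, hsub] at hz
  have hA' : ‖A (perpProj x z)‖ ≤ ‖v z‖ + (2 * (K : ℝ))⁻¹ * ‖perpProj x z‖ := by
    linarith [norm_le_norm_add_norm_sub' (A (perpProj x z)) (v z),
      norm_sub_rev (A (perpProj x z)) (v z)]
  have hhalf : K * ((2 * (K : ℝ))⁻¹ * ‖perpProj x z‖) = ‖perpProj x z‖ / 2 := by field_simp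
  linarith [hbound z, mul_le_mul_of_nonneg_left hA' hK'.le]

variable [FiniteDimensional ℝ E] {ι : Type*} {u : ι → E}

theorem exists_sphere_norm_perpProj_le (hv : ContDiff ℝ 1 v)
    (hhom : ∀ (c : ℝ) x, v (c • x) = c ^ 2 • v x)
    (hzeros : ∀ x ≠ 0, v x = 0 → ∃ i, x ∈ ℝ ∙ u i)
    (hS : ∀ x, ‖x‖ = 1 → v x = 0 → Function.Injective (axialMap x (fderiv ℝ v x))) :
    ∃ K > 0, ∀ z ∈ sphere (0 : E) 1,
      1 ≤ K * ‖v z‖ ∨ ∃ i, ‖perpProj (u i) z‖ ≤ K * ‖v z‖ := by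
  refine (isCompact_sphere (0 : E) 1).induction_on
    (p := fun s => ∃ K > 0, ∀ z ∈ s, 1 ≤ K * ‖v z‖ ∨ ∃ i, ‖perpProj (u i) z‖ ≤ K * ‖v z‖)
    ⟨1, one_pos, by simp⟩ (fun s t hst ⟨K, hK, ht⟩ => ⟨K, hK, fun z hz => ht z (hst hz)⟩) ?_ ?_
  · rintro s t ⟨K, hK, hs⟩ ⟨L, -, ht⟩
    have hle {J : ℝ} (hJ : J ≤ max K L) (z : E) : J * ‖v z‖ ≤ max K L * ‖v z‖ :=
      mul_le_mul_of_nonneg_right hJ (norm_nonneg _)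
    refine ⟨max K L, lt_max_of_lt_left hK, ?_⟩
    rintro z (hz | hz)
    · exact (hs z hz).imp (·.trans (hle (le_max_left _ _) z))
        (Exists.imp fun i hi => hi.trans (hle (le_max_left _ _) z))
    · exact (ht z hz).imp (·.trans (hle (le_max_right _ _) z))
        (Exists.imp fun i hi => hi.trans (hle (le_max_right _ _) z))
  · intro x hx
    have hx1 : ‖x‖ = 1 := mem_sphere_zero_iff_norm.1 hx
    have hx0 : x ≠ 0 := norm_ne_zero_iff.1 (hx1 ▸ one_ne_zero)
    suffices h : ∃ K > 0, ∀ᶠ z in 𝓝 x,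
        1 ≤ K * ‖v z‖ ∨ ∃ i, ‖perpProj (u i) z‖ ≤ K * ‖v z‖ by
      obtain ⟨K, hK, h⟩ := h
      exact ⟨_, mem_nhdsWithin_of_mem_nhds h, K, hK, fun z hz => hz⟩
    rcases eq_or_ne (v x) 0 with hvx | hvx
    · obtain ⟨i, hi⟩ := hzeros x hx0 hvx
      obtain ⟨K, hK, h⟩ := exists_eventually_norm_perpProj_le hx1
        (hv.contDiffAt.hasStrictFDerivAt one_ne_zero) (by simp [hhom, hvx]) (hS x hx1 hvx)
      exact ⟨K, hK, h.mono fun z hz => .inr ⟨i, perpProj_congr hx0 hi ▸ hz⟩⟩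
    · have hpos : 0 < ‖v x‖ := norm_pos_iff.2 hvx
      have hlt : ∀ᶠ z in 𝓝 x, ‖v x‖ / 2 < ‖v z‖ :=
        hv.continuous.norm.continuousAt.eventually_const_lt (half_lt_self hpos)
      refine ⟨2 / ‖v x‖, by positivity, hlt.mono fun z hz => .inl ?_⟩
      rw [div_mul_eq_mul_div, one_le_div hpos]
      linarith

theorem exists_norm_perpProj_le (hv : ContDiff ℝ 1 v)
    (hhom : ∀ (c : ℝ) x, v (c • x) = c ^ 2 • v x)
    (hzeros : ∀ x ≠ 0, v x = 0 → ∃ i, x ∈ ℝ ∙ u i)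
    (hS : ∀ x, ‖x‖ = 1 → v x = 0 → Function.Injective (axialMap x (fderiv ℝ v x))) :
    ∃ K > 0, ∀ z, ‖z‖ ^ 2 ≤ K * ‖v z‖ ∨ ∃ i, ‖z‖ * ‖perpProj (u i) z‖ ≤ K * ‖v z‖ := by
  obtain ⟨K, hK, hsphere⟩ := exists_sphere_norm_perpProj_le hv hhom hzeros hS
  refine ⟨K, hK, fun z => ?_⟩
  rcases eq_or_ne z 0 with rfl | hz
  · exact .inl (by rw [norm_zero, zero_pow two_ne_zero]; positivity)
  have hpos : 0 < ‖z‖ := norm_pos_iff.2 hz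
  have hscale (t : ℝ) : t ≤ K * ‖v (‖z‖⁻¹ • z)‖ ↔ ‖z‖ ^ 2 * t ≤ K * ‖v z‖ := by
    rw [hhom, norm_smul, norm_pow, norm_inv, norm_norm, mul_left_comm, inv_pow,
      le_inv_mul_iff₀ (by positivity)]
  refine (hsphere (‖z‖⁻¹ • z) (by simp [norm_smul, hpos.ne'])).imp
    (fun h => by simpa using (hscale 1).1 h) (Exists.imp fun i hi => ?_)
  have hi := (hscale _).1 hi
  rwa [map_smul, norm_smul, norm_inv, norm_norm, pow_two, mul_assoc,
    mul_inv_cancel_left₀ hpos.ne'] at hi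

theorem exists_mem_closedBall_or_mem_tube (hv : ContDiff ℝ 1 v)
    (hhom : ∀ (c : ℝ) x, v (c • x) = c ^ 2 • v x) (horth : ∀ x, inner ℝ (v x) x = 0)
    (hu : ∀ i, ‖u i‖ = 1) (hzeros : ∀ x ≠ 0, v x = 0 → ∃ i, x ∈ ℝ ∙ u i)
    (hS : ∀ x, ‖x‖ = 1 → v x = 0 → Function.Injective (axialMap x (fderiv ℝ v x)))
    {a : ℝ} (ha : 0 < a) {M : ℝ} (hM : 0 ≤ M) :
    ∃ R C₀, ∀ C ≥ C₀, ∀ δ > 0, ∀ z, ‖z + δ⁻¹ • v z‖ ≤ M →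
      (∀ i, 4 * a ≤ inner ℝ (u i) (z + δ⁻¹ • v z)) →
      z ∈ closedBall 0 (√δ * R) ∨ ∃ i, z ∈ tube (u i) a M (δ * C) := by
  obtain ⟨K, hK, hperp⟩ := exists_norm_perpProj_le hv hhom hzeros hS
  refine ⟨√(K * M * (1 + M / a)), K * M / a, fun C hC δ hδ z hfM huf => ?_⟩
  have hball (h : ‖z‖ ^ 2 ≤ δ * (K * M * (1 + M / a))) :
      z ∈ closedBall 0 (√δ * √(K * M * (1 + M / a))) := by
    rw [mem_closedBall_zero_iff, ← Real.sqrt_mul hδ.le]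
    exact Real.le_sqrt_of_sq_le h
  have hortho : inner ℝ (δ⁻¹ • v z) z = 0 := by rw [real_inner_smul_left, horth, mul_zero]
  have hfz : inner ℝ (z + δ⁻¹ • v z) z = ‖z‖ ^ 2 := by
    rw [inner_add_left, hortho, add_zero, real_inner_self_eq_norm_sq]
  have hvz : K * ‖v z‖ ≤ δ * (K * M) := by
    have h := norm_le_norm_add_of_inner_eq_zero hortho
    rw [add_comm, norm_smul, norm_inv, Real.norm_of_nonneg hδ.le] at h
    nlinarith [(inv_mul_le_iff₀ hδ).1 (h.trans hfM)]
  have hδKM : 0 ≤ δ * (K * M) := by positivity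
  have hδKMa : 0 ≤ δ * (K * M) * (M / a) := by positivity
  rcases hperp z with hz | ⟨i, hz⟩
  · exact .inl (hball (by linarith))
  refine (sq_norm_le_or_mem_tube (hu i) ha hδKM hfz hfM (huf i) (hz.trans hvz)).imp
    (fun h => hball (by linarith)) (fun h => ⟨i, tube_subset_tube ?_ h⟩)
  rw [mul_div_assoc]
  exact mul_le_mul_of_nonneg_left hC hδ.le

end Localization

theorem integral_eq_setIntegral_add_sum_setIntegral {X F ι : Type*} [MeasurableSpace X]
    [NormedAddCommGroup F] [NormedSpace ℝ F] [Fintype ι] {μ : Measure X} {f : X → F} {s : Set X}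
    {t : ι → Set X} (ht : ∀ i, MeasurableSet (t i))
    (hst : ∀ i, Disjoint s (t i)) (htt : Pairwise (Function.onFun Disjoint t))
    (hfs : IntegrableOn f s μ) (hft : ∀ i, IntegrableOn f (t i) μ)
    (hf : ∀ x, f x ≠ 0 → x ∈ s ∨ ∃ i, x ∈ t i) :
    ∫ x, f x ∂μ = ∫ x in s, f x ∂μ + ∑ i, ∫ x in t i, f x ∂μ := by
  rw [← integral_iUnion_fintype ht htt hft,
    ← setIntegral_union (disjoint_iUnion_right.2 hst) (MeasurableSet.iUnion ht) hfs
      (integrableOn_finite_iUnion.2 hft)]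
  refine (setIntegral_eq_integral_of_forall_compl_eq_zero fun x hx => ?_).symm
  by_contra hfx
  exact hx ((hf x hfx).imp id mem_iUnion.2)

section Index

variable {E : Type*} [NormedAddCommGroup E] [InnerProductSpace ℝ E] [FiniteDimensional ℝ E]
  {v : E → E} {ι : Type*} {u : ι → E}

theorem exists_bump_inner_norm [Finite ι] [MeasurableSpace E] [BorelSpace E] (μ : Measure E)
    [μ.IsAddHaarMeasure] (hu : ∀ i, ‖u i‖ = 1) {y : E} (hy : ∀ i, 0 < inner ℝ (u i) y) :
    ∃ φ : E → ℝ, ContDiff ℝ 1 φ ∧ HasCompactSupport φ ∧ 0 < ∫ x, φ x ∂μ ∧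
      ∃ a > 0, ∃ M ≥ 0, ∀ x, φ x ≠ 0 → (∀ i, 4 * a ≤ inner ℝ (u i) x) ∧ ‖x‖ ≤ M := by
  have hsmall : ∀ᶠ a : ℝ in 𝓝 0, ∀ i, 5 * a < inner ℝ (u i) y :=
    eventually_all.2 fun i =>
      ContinuousAt.eventually_lt (by fun_prop) (by fun_prop) (by simpa using hy i)
  obtain ⟨a, hay, ha : 0 < a⟩ :=
    ((hsmall.filter_mono (nhdsWithin_le_nhds (s := Ioi 0))).and self_mem_nhdsWithin).exists
  let φ : ContDiffBump y := ⟨a / 2, a, half_pos ha, half_lt_self ha⟩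
  refine ⟨φ, φ.contDiff, φ.hasCompactSupport, φ.integral_pos, a, ha, ‖y‖ + a,
    by positivity, fun x hx => ?_⟩
  have hxy : ‖x - y‖ < a := by
    rw [← dist_eq_norm, ← mem_ball]
    exact φ.support_eq ▸ Function.mem_support.2 hx
  refine ⟨fun i => ?_, by linarith [norm_le_norm_add_norm_sub' x y]⟩
  have h := neg_le_of_abs_le (abs_real_inner_le_norm (u i) (x - y))
  rw [hu, one_mul, inner_sub_right] at h
  linarith [hay i]

variable [Fintype ι]

theorem tendsto_integral_formPullback_add_inv_smul [MeasurableSpace E] [BorelSpace E]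
    (μ : Measure E) [μ.IsAddHaarMeasure] (hn : Odd (Module.finrank ℝ E)) (hv : ContDiff ℝ 1 v)
    (hhom : ∀ (c : ℝ) x, v (c • x) = c ^ 2 • v x) (horth : ∀ x, inner ℝ (v x) x = 0)
    (hu : ∀ i, ‖u i‖ = 1) (hvu : ∀ i, v (u i) = 0)
    (hindep : Pairwise fun i j => u i ∉ ℝ ∙ u j)
    (hzeros : ∀ x ≠ 0, v x = 0 → ∃ i, x ∈ ℝ ∙ u i)
    (hS : ∀ x, ‖x‖ = 1 → v x = 0 → Function.Injective (axialMap x (fderiv ℝ v x)))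
    {φ : E → ℝ} (hφ : Continuous φ) {a M : ℝ} (ha : 0 < a) (hM : 0 ≤ M)
    (hsupp : ∀ y, φ y ≠ 0 → (∀ i, 4 * a ≤ inner ℝ (u i) y) ∧ ‖y‖ ≤ M) :
    Tendsto (fun δ : ℝ => ∫ z, formPullback (fun z => z + δ⁻¹ • v z) φ z ∂μ) (𝓝[>] 0)
      (𝓝 (∑ i, SignType.sign (axialMap (u i) (fderiv ℝ v (u i))).det * ∫ y, φ y ∂μ)) := by
  obtain ⟨R, C₀, hloc⟩ := exists_mem_closedBall_or_mem_tube hv hhom horth hu hzeros hS ha hM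
  have htubes (i : ι) := eventually_tendsto_setIntegral_tube_formPullback μ hv hhom (hvu i)
    (hu i) (inner_fderiv_eq_zero_of_inner_eq_zero (hv.differentiable one_ne_zero _) horth (hvu i))
    (hS (u i) (hu i) (hvu i)) ha hφ (M := M)
    fun y hy => ⟨by linarith [(hsupp y hy).1 i], (hsupp y hy).2⟩
  obtain ⟨C, hC₀, hC⟩ := ((eventually_ge_atTop C₀).and (eventually_all.2 htubes)).exists
  have hball := tendsto_setIntegral_closedBall_formPullback μ hn hv hhom hφ R
  have hlim := hball.add (tendsto_finsetSum Finset.univ fun i _ => hC i)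
  rw [zero_add] at hlim
  refine hlim.congr' ?_
  have hradius : ∀ᶠ δ : ℝ in 𝓝 0, √δ * R < a :=
    ContinuousAt.eventually_lt (by fun_prop) (by fun_prop) (by simpa using ha)
  have hdisj (i j : ι) (hij : i ≠ j) :
      ∀ᶠ δ : ℝ in 𝓝 0, Disjoint (tube (u i) a M (δ * C)) (tube (u j) a M (δ * C)) := by
    have hcont : Tendsto (fun δ : ℝ => δ * C) (𝓝 0) (𝓝 0) := by
      simpa using (continuous_mul_const C).tendsto 0
    exact hcont.eventually (eventually_disjoint_tube (hu i) (hindep hij) ha M)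
  filter_upwards [self_mem_nhdsWithin, hradius.filter_mono nhdsWithin_le_nhds,
    (eventually_all.2 fun i => eventually_all.2 fun j => eventually_imp_distrib_left.2
      (hdisj i j)).filter_mono nhdsWithin_le_nhds] with δ hδ hr hd
  have hcont : Continuous (formPullback (fun z => z + δ⁻¹ • v z) φ) :=
    continuous_formPullback (contDiff_id.add (contDiff_const.smul hv)) hφ
  refine (integral_eq_setIntegral_add_sum_setIntegral
    (fun i => (isCompact_tube (hu i) a M _).measurableSet)
    (fun i => disjoint_closedBall_tube (hu i) hr M _) hd
    (hcont.continuousOn.integrableOn_compact (isCompact_closedBall 0 _))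
    (fun i => hcont.continuousOn.integrableOn_compact (isCompact_tube (hu i) a M _)) ?_).symm
  intro z hz
  obtain ⟨hfu, hfM⟩ := hsupp _ (left_ne_zero_of_mul hz)
  exact hloc C hC₀ δ hδ z hfM hfu

theorem sum_sign_det_axialMap_eq_one (hn : Odd (Module.finrank ℝ E)) (hv : ContDiff ℝ 1 v)
    (hhom : ∀ (c : ℝ) x, v (c • x) = c ^ 2 • v x) (horth : ∀ x, inner ℝ (v x) x = 0)
    (hu : ∀ i, ‖u i‖ = 1) (hvu : ∀ i, v (u i) = 0)
    (hindep : Pairwise fun i j => u i ∉ ℝ ∙ u j)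
    (hzeros : ∀ x ≠ 0, v x = 0 → ∃ i, x ∈ ℝ ∙ u i)
    (hS : ∀ x, ‖x‖ = 1 → v x = 0 → Function.Injective (axialMap x (fderiv ℝ v x)))
    {y : E} (hy : ∀ i, 0 < inner ℝ (u i) y) :
    ∑ i, (SignType.sign (axialMap (u i) (fderiv ℝ v (u i))).det : ℝ) = 1 := by
  borelize E
  have : Nontrivial E := Module.nontrivial_of_finrank_pos hn.pos
  obtain ⟨φ, hφ, hφc, hφ0, a, ha, M, hM, hsupp⟩ := exists_bump_inner_norm volume hu hy
  have hlim := tendsto_integral_formPullback_add_inv_smul volume hn hv hhom horth hu hvu hindep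
    hzeros hS hφ.continuous ha hM hsupp
  have hdegree (δ : ℝ) : ∫ z, formPullback (fun z => z + δ⁻¹ • v z) φ z = ∫ z, φ z :=
    integral_formPullback_id_add_of_inner_eq_zero volume (v := fun z => δ⁻¹ • v z)
      (contDiff_const.smul hv)
      (fun x => by rw [real_inner_smul_left, horth, mul_zero]) hφ hφc
  simp only [hdegree, ← Finset.sum_mul] at hlim
  have heq := tendsto_nhds_unique hlim tendsto_const_nhds
  exact (mul_eq_right₀ hφ0.ne').1 heq

end Index

theorem odd_card_of_sum_sign_eq_one {ι : Type*} [Fintype ι] {s : ι → ℝ} (hs : ∀ i, s i ≠ 0)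
    (hsum : ∑ i, (SignType.sign (s i) : ℝ) = 1) : Odd (Fintype.card ι) := by
  have hint : ∑ i, (SignType.sign (s i) : ℤ) = 1 := by
    have hcast : ((∑ i, (SignType.sign (s i) : ℤ) : ℤ) : ℝ) = 1 := by
      simpa only [Int.cast_sum, SignType.intCast_cast] using hsum
    exact_mod_cast hcast
  have hone (i : ι) : ((SignType.sign (s i) : ℤ) : ZMod 2) = 1 := by
    rcases (hs i).lt_or_gt with h | h
    · rw [sign_neg h]; decide
    · rw [sign_pos h]; decide
  rw [← ZMod.natCast_eq_one_iff_odd]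
  simpa [-SignType.intCast_cast, hone] using congrArg (Int.cast : ℤ → ZMod 2) hint

section Lines

theorem span_singleton_eq_of_finrank_eq_one {K V : Type*} [DivisionRing K] [AddCommGroup V]
    [Module K V] {L : Submodule K V} (hL : Module.finrank K L = 1) {x : V} (hx : x ∈ L)
    (hx0 : x ≠ 0) : K ∙ x = L :=
  have : FiniteDimensional K L := Module.finite_of_finrank_eq_succ hL
  Submodule.eq_of_le_of_finrank_eq ((Submodule.span_singleton_le_iff_mem x L).2 hx)
    (by rw [finrank_span_singleton hx0, hL])

theorem exists_unit_span_eq_of_finrank_eq_one {E : Type*} [NormedAddCommGroup E]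
    [NormedSpace ℝ E] {L : Submodule ℝ E} (hL : Module.finrank ℝ L = 1) :
    ∃ u : E, ‖u‖ = 1 ∧ ℝ ∙ u = L := by
  have : Nontrivial L := Module.nontrivial_of_finrank_pos (hL ▸ one_pos)
  obtain ⟨u, hu⟩ := exists_norm_eq L zero_le_one
  exact ⟨u, hu, span_singleton_eq_of_finrank_eq_one hL u.2 (norm_ne_zero_iff.1 (hu ▸ one_ne_zero))⟩

variable {E : Type*} [NormedAddCommGroup E] [InnerProductSpace ℝ E] [FiniteDimensional ℝ E]

theorem exists_forall_unit_span_eq_inner_pos {ι : Type*} [Finite ι] {ℓ : ι → Submodule ℝ E}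
    (hℓ : ∀ i, Module.finrank ℝ (ℓ i) = 1) :
    ∃ (u : ι → E) (y : E), ∀ i, ‖u i‖ = 1 ∧ ℝ ∙ u i = ℓ i ∧ 0 < inner ℝ (u i) y := by
  choose g hg hgℓ using fun i => exists_unit_span_eq_of_finrank_eq_one (hℓ i)
  obtain ⟨f, hf⟩ := Module.exists_dual_forall_apply_ne_zero (K := ℝ) g
    fun i => norm_ne_zero_iff.1 (hg i ▸ one_ne_zero)
  obtain ⟨y, rfl⟩ : ∃ y : E, innerₗ E y = f :=
    ⟨(InnerProductSpace.toDual ℝ E).symm f.toContinuousLinearMap, by ext; simp⟩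
  have horient (i : ι) : ∃ u, ‖u‖ = 1 ∧ ℝ ∙ u = ℓ i ∧ 0 < inner ℝ u y := by
    have hne : inner ℝ (g i) y ≠ 0 := fun h => hf i ((real_inner_comm _ _).trans h)
    rcases hne.lt_or_gt with h | h
    · exact ⟨-g i, by rw [norm_neg, hg], by rw [← Set.neg_singleton, Submodule.span_neg, hgℓ],
        by rwa [inner_neg_left, neg_pos]⟩
    · exact ⟨g i, hg i, hgℓ i, h⟩
  choose u hu using horient
  exact ⟨u, y, hu⟩

theorem odd_card_of_inner_eq_zero (hn : Odd (Module.finrank ℝ E)) {v : E → E}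
    (hv : ContDiff ℝ 1 v) (hhom : ∀ (c : ℝ) x, v (c • x) = c ^ 2 • v x)
    (horth : ∀ x, inner ℝ (v x) x = 0) {ι : Type*} [Fintype ι] {ℓ : ι → Submodule ℝ E}
    (hℓ : ∀ i, Module.finrank ℝ (ℓ i) = 1) (hinj : Function.Injective ℓ)
    (hzeros : ∀ x ≠ 0, v x = 0 ↔ ∃ i, x ∈ ℓ i)
    (hker : ∀ x ≠ 0, v x = 0 → (fderiv ℝ v x).ker ≤ ℝ ∙ x) : Odd (Fintype.card ι) := by
  obtain ⟨u, y, huy⟩ := exists_forall_unit_span_eq_inner_pos hℓ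
  have hu (i : ι) : ‖u i‖ = 1 := (huy i).1
  have huℓ (i : ι) : ℝ ∙ u i = ℓ i := (huy i).2.1
  have hu0 (i : ι) : u i ≠ 0 := norm_ne_zero_iff.1 (hu i ▸ one_ne_zero)
  have hvu (i : ι) : v (u i) = 0 :=
    (hzeros _ (hu0 i)).2 ⟨i, huℓ i ▸ Submodule.mem_span_singleton_self _⟩
  have hindep : Pairwise fun i j => u i ∉ ℝ ∙ u j := fun i j hij hmem => hij <| hinj <| by
    rw [← huℓ i, ← span_singleton_eq_of_finrank_eq_one (hℓ j) (huℓ j ▸ hmem) (hu0 i)]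
  have hS (x : E) (hx : ‖x‖ = 1) (hvx : v x = 0) :
      Function.Injective (axialMap x (fderiv ℝ v x)) :=
    injective_axialMap hx
      (inner_fderiv_eq_zero_of_inner_eq_zero (hv.differentiable one_ne_zero x) horth hvx)
      (hker x (norm_ne_zero_iff.1 (hx ▸ one_ne_zero)) hvx)
  have hdet (i : ι) : (axialMap (u i) (fderiv ℝ v (u i))).det ≠ 0 :=
    (LinearMap.isUnit_iff_isUnit_det _).1 ((LinearMap.isUnit_iff_ker_eq_bot _).2
      (LinearMap.ker_eq_bot.2 (hS (u i) (hu i) (hvu i)))) |>.ne_zero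
  refine odd_card_of_sum_sign_eq_one hdet ?_
  exact sum_sign_det_axialMap_eq_one hn hv hhom horth hu hvu hindep
    (fun x hx hvx => by simpa only [huℓ] using (hzeros x hx).1 hvx) hS fun i => (huy i).2.2

end Lines

theorem exists_linearEquiv_inner_eq {V : Type*} [AddCommGroup V] [Module ℝ V]
    [FiniteDimensional ℝ V] {B : V →ₗ[ℝ] V →ₗ[ℝ] ℝ} (hsymm : ∀ x y, B x y = B y x)
    (hpos : ∀ x ≠ 0, 0 < B x x) :
    ∃ T : V ≃ₗ[ℝ] EuclideanSpace ℝ (Fin (Module.finrank ℝ V)),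
      ∀ x y, inner ℝ (T x) (T y) = B x y := by
  let core : InnerProductSpace.Core ℝ V :=
    { inner := fun x y => B x y
      conj_inner_symm := fun x y => hsymm y x
      re_inner_nonneg := fun x => by
        rcases eq_or_ne x 0 with rfl | hx
        · simp
        · exact (hpos x hx).le
      add_left := fun x y z => by simp
      smul_left := fun x y r => by simp
      definite := fun x hx => of_not_not fun hx0 => (hpos x hx0).ne' hx }
  let _ : NormedAddCommGroup V := core.toNormedAddCommGroup
  let _ : InnerProductSpace ℝ V := InnerProductSpace.ofCore core.toCore
  let b := (stdOrthonormalBasis ℝ V).repr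
  exact ⟨b.toLinearEquiv, b.inner_map_map⟩

section Nondegenerate

theorem ker_le_span_singleton_of_rootMultiplicity_charpoly_le_one {K V : Type*} [Field K]
    [AddCommGroup V] [Module K V] [FiniteDimensional K V] {A : Module.End K V}
    (hA : A.charpoly.rootMultiplicity 0 ≤ 1) {x : V} (hx : x ≠ 0) (hAx : A x = 0) :
    A.ker ≤ K ∙ x := by
  refine (Submodule.eq_of_le_of_finrank_le
    ((Submodule.span_singleton_le_iff_mem x _).2 (LinearMap.mem_ker.2 hAx)) ?_).ge
  rw [finrank_span_singleton hx, ← Module.End.eigenspace_zero]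
  exact (A.finrank_eigenspace_le 0).trans hA

theorem charpoly_jacobianMatrix {p : ℕ} (v : (Fin p → ℝ) → (Fin p → ℝ)) (ω : Fin p → ℝ) :
    (jacobianMatrix v ω).charpoly = (fderiv ℝ v ω).toLinearMap.charpoly := by
  rw [← LinearMap.charpoly_toMatrix _ (Pi.basisFun ℝ (Fin p))]
  rfl

theorem ker_fderiv_le_span_singleton_of_count_aroots_charpoly {p : ℕ}
    {v : (Fin p → ℝ) → (Fin p → ℝ)} {ω : Fin p → ℝ} (hω : ω ≠ 0) (hω' : fderiv ℝ v ω ω = 0)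
    (hcount : Multiset.count 0 ((jacobianMatrix v ω).charpoly.aroots ℂ) = 1) :
    (fderiv ℝ v ω).ker ≤ ℝ ∙ ω := by
  refine ker_le_span_singleton_of_rootMultiplicity_charpoly_le_one
    (A := (fderiv ℝ v ω).toLinearMap) ?_ hω hω'
  rw [← charpoly_jacobianMatrix, eq_rootMultiplicity_map (algebraMap ℝ ℂ).injective, map_zero,
    ← count_roots]
  convert hcount.le

end Nondegenerate

theorem odd_number_of_slsm_in_odd_dimension_general {V : Type*} [NormedAddCommGroup V]
    [NormedSpace ℝ V] (hn : Odd (Module.finrank ℝ V)) {v : V → V} (hv : ContDiff ℝ 1 v)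
    (hhom : ∀ (c : ℝ) x, v (c • x) = c ^ 2 • v x) {B : V →ₗ[ℝ] V →ₗ[ℝ] ℝ}
    (hsymm : ∀ x y, B x y = B y x) (hpos : ∀ x ≠ 0, 0 < B x x) (hB : ∀ x, B (v x) x = 0)
    {ι : Type*} [Fintype ι] {ℓ : ι → Submodule ℝ V} (hℓ : ∀ i, Module.finrank ℝ (ℓ i) = 1)
    (hinj : Function.Injective ℓ) (hzeros : ∀ x ≠ 0, v x = 0 ↔ ∃ i, x ∈ ℓ i)
    (hker : ∀ x ≠ 0, v x = 0 → (fderiv ℝ v x).ker ≤ ℝ ∙ x) : Odd (Fintype.card ι) := by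
  have : FiniteDimensional ℝ V := Module.finite_of_finrank_pos hn.pos
  obtain ⟨T, hT⟩ := exists_linearEquiv_inner_eq hsymm hpos
  let e := T.toContinuousLinearEquiv
  have hinner (x y) : inner ℝ (e x) y = B x (e.symm y) := by
    rw [← hT]
    exact congrArg _ (e.apply_symm_apply y).symm
  have hfderiv (x h) : fderiv ℝ (e ∘ v ∘ e.symm) x h = e (fderiv ℝ v (e.symm x) (e.symm h)) := by
    rw [e.comp_fderiv, e.symm.comp_right_fderiv]
    rfl
  have hne (x) (hx : x ≠ 0) : e.symm x ≠ 0 := e.symm.map_ne_zero_iff.2 hx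
  have hzero (x) : (e ∘ v ∘ e.symm) x = 0 ↔ v (e.symm x) = 0 := map_eq_zero_iff e e.injective
  refine odd_card_of_inner_eq_zero (v := e ∘ v ∘ e.symm)
    (ℓ := Submodule.map (T : V →ₗ[ℝ] _) ∘ ℓ)
    (by rwa [finrank_euclideanSpace_fin]) (e.contDiff.comp (hv.comp e.symm.contDiff))
    (fun c x => by simp [hhom]) (fun x => (hinner _ _).trans (hB _))
    (fun i => by rw [Function.comp_apply, LinearEquiv.finrank_map_eq, hℓ])
    ((Submodule.map_injective_of_injective T.injective).comp hinj)
    (fun x hx => ?_) fun x hx hvx h hh => ?_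
  · rw [hzero, hzeros _ (hne x hx)]
    exact exists_congr fun i => (Submodule.mem_map_equiv (ℓ i)).symm
  · have hh' : e (fderiv ℝ v (e.symm x) (e.symm h)) = 0 :=
      (hfderiv x h).symm.trans (LinearMap.mem_ker.1 hh)
    have hmem := hker _ (hne x hx) ((hzero x).1 hvx) ((map_eq_zero_iff e e.injective).1 hh')
    obtain ⟨c, hc⟩ := Submodule.mem_span_singleton.1 hmem
    refine Submodule.mem_span_singleton.2 ⟨c, e.symm.injective ?_⟩
    rw [map_smul, hc]

/-- (Corollary 2 of the paper.) For odd `p`, a `C¹` map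
`v : ℝᵖ → ℝᵖ` homogeneous of degree 2 admitting a positive definite quadratic
first integral, whose nonzero zero set is a finite union of punctured distinct
one-dimensional subspaces `ℓ₁, …, ℓ_N`, all nondegenerate (at every nonzero zero of
`v`, zero is a root of algebraic multiplicity exactly one of the characteristic
polynomial of the Jacobian), has an odd number `N` of straight lines of steady
motions. -/
theorem odd_number_of_slsm_in_odd_dimension
    (p : ℕ) (hp : Odd p)
    (v : (Fin p → ℝ) → (Fin p → ℝ))
    (hcd : ContDiff ℝ 1 v)
    (hhom : ∀ (c : ℝ) (ω : Fin p → ℝ), v (c • ω) = c ^ 2 • v ω)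
    (B : (Fin p → ℝ) →ₗ[ℝ] (Fin p → ℝ) →ₗ[ℝ] ℝ)
    (hsymm : ∀ x y, B x y = B y x)
    (hposdef : ∀ x : Fin p → ℝ, x ≠ 0 → 0 < B x x)
    (hint : ∀ ω, B (v ω) ω = 0)
    (N : ℕ) (ℓ : Fin N → Submodule ℝ (Fin p → ℝ))
    (hdim : ∀ k, Module.finrank ℝ (ℓ k) = 1)
    (hdistinct : Function.Injective ℓ)
    (hzeros : {ω : Fin p → ℝ | ω ≠ 0 ∧ v ω = 0} =
      ⋃ k : Fin N, ((ℓ k : Set (Fin p → ℝ)) \ {0}))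
    (hnd : ∀ ω : Fin p → ℝ, ω ≠ 0 → v ω = 0 →
      Multiset.count 0 ((jacobianMatrix v ω).charpoly.aroots ℂ) = 1) :
    Odd N := by
  have hker (ω : Fin p → ℝ) (hω : ω ≠ 0) (hvω : v ω = 0) : (fderiv ℝ v ω).ker ≤ ℝ ∙ ω :=
    ker_fderiv_le_span_singleton_of_count_aroots_charpoly hω
      (by rw [fderiv_apply_self_of_homogeneous_two (hcd.differentiable one_ne_zero ω) hhom, hvω,
        smul_zero])
      (hnd ω hω hvω)
  simpa only [Fintype.card_fin] using odd_number_of_slsm_in_odd_dimension_general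
    (by rwa [Module.finrank_fin_fun]) hcd hhom hsymm hposdef hint hdim hdistinct
    (fun ω hω => by simpa [hω] using Set.ext_iff.1 hzeros ω) hker
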